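/- Let n ≥ 2, d ∈ ℝ and t̃ ∈ S^{d}_{1,0}(ℝ^{n−1}×ℝ^{n−1}, 𝒮(ℝ̄₊)). Then there exists k̃ ∈ S^{d}_{1,0}(ℝ^{n−1}×ℝ^{n−1}, 𝒮(ℝ̄₊)) such that for all u ∈ 𝒮(ℝⁿ) and all ψ ∈ 𝒮(ℝ^{n−1}): ∫_{ℝ^{n−1}} (OPT(t̃)u)(x′) · conj(ψ(x′)) dx′ = ∫_{ℝⁿ₊} u(x) · conj((OPK(k̃)ψ)(x)) dx. (Every trace operator of class 0 and order d has the form K* e⁺ for a Poisson operator K with symbol-kernel in the same class S^{d}_{1,0}(𝒮(ℝ̄₊)), i.e. a Poisson operator of order d+1.) -/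

import Mathlib

/-!
Write `a(y', t, ξ') = conj t̃(y', t, ξ')`. Fubini turns the trace pairing into
`(2π)^(-m) ∫₀^∞ ∫ conj(J_t(ξ')) ú(ξ', t) dξ' dt` with `J_t(ξ') = ∫ e^{-i y'·ξ'} ψ(y') a(y', t, ξ') dy'`
(`trace_side`). Thus `K` has to be the operator `ψ ↦ (2π)^(-m) ∫ e^{i x'·ξ'} J_t(ξ') dξ'`, which is a
Poisson operator whose *amplitude* depends on `y'` instead of `x'`, and the point is to rewrite it
with a symbol-kernel depending on `x'`. Formally this symbol-kernel is the oscillatory integral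
`k(x', t, η) = (2π)^(-m) ∫∫ e^{-i z·ζ} a(x' + z, t, η + ζ) dz dζ`.

To have absolutely convergent integrals, `1 = ∏ (1 + i zⱼ)⁻² · ∏ (1 + i zⱼ)²` is inserted and the
second factor is moved by integration by parts in `ζ` onto `a`, where it becomes `∏ (1 + ∂_{ξⱼ})²`.
This operator preserves the order. The result is `KK a`, an integral of the form `UU w b` with `b` in
the class of `a` and a weight `w` which, with all its derivatives, is bounded by the integrable
function `Om z = ∏ (1 + zⱼ²)⁻¹`.

* The `z`-integral `Ug w b` is the Fourier transform of a smooth integrable function, so it decays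
  rapidly in `ζ`; Peetre's inequality converts the growth of `b` at `η + ζ` into growth at `η`
  (`Ug_bound`). Differentiation under the integral then shows that `UU w` preserves the
  symbol-kernel classes (`InC.UU`), including smoothness up to `t = 0`.
* Substituting `ζ = ξ' - η` and applying Fourier inversion to `ψ` shows that `KK a` acts on `ψ` as
  the operator with amplitude; the regularisation is undone by the integration by parts
  (`key_identity`).
* Fubini on the half-space gives the same double integral as on the trace side (`poisson_side`).

The estimates use the class `InC`, formulated with words of coordinate derivatives on the
half-space, which is stable under differentiation by construction; `InC_of_InPK` and `InPK_of_InC`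
compare it with the multi-index seminorms.
-/

open MeasureTheory Filter Complex
open scoped ENNReal NNReal Real BigOperators Topology

noncomputable section

/-- `ℝ^m`, with its (sup-normed) product structure; the Lebesgue measure is the
product measure. -/
abbrev Eu (m : ℕ) : Type := Fin m → ℝ

/-- Tempered distributions on `ℝ^m`. -/
abbrev TD (m : ℕ) := SchwartzMap (Eu m) ℂ →L[ℂ] ℂ

/-- The dot product `x · ξ = ∑ xᵢ ξᵢ`. -/
def dotp {m : ℕ} (x ξ : Eu m) : ℝ := ∑ i, x i * ξ i

/-- The euclidean norm `|x|`. -/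
def eun {m : ℕ} (x : Eu m) : ℝ := Real.sqrt (∑ i, x i ^ 2)

/-- The japanese bracket `⟨ξ⟩ = (1 + |ξ|²)^(1/2)`. -/
def jap {m : ℕ} (ξ : Eu m) : ℝ := Real.sqrt (1 + ∑ i, ξ i ^ 2)

/-- The Fourier transform `ℱf(ξ) = ∫ e^{-i x·ξ} f(x) dx` (paper convention). -/
def pF {m : ℕ} (f : Eu m → ℂ) (ξ : Eu m) : ℂ :=
  ∫ x : Eu m, Complex.exp (-(Complex.I * (dotp x ξ : ℂ))) * f x

/-- The inverse Fourier transform `(2π)^{-m} ∫ e^{i x·ξ} f(ξ) dξ`. -/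
def pFinv {m : ℕ} (f : Eu m → ℂ) (x : Eu m) : ℂ :=
  (((2 * Real.pi) ^ m : ℝ)⁻¹) • ∫ ξ : Eu m, Complex.exp (Complex.I * (dotp x ξ : ℂ)) * f ξ

/-- One-dimensional Fourier transform. -/
def pF1 (f : ℝ → ℂ) (τ : ℝ) : ℂ :=
  ∫ t : ℝ, Complex.exp (-(Complex.I * ((t * τ : ℝ) : ℂ))) * f t

/-- One-dimensional inverse Fourier transform. -/
def pFinv1 (f : ℝ → ℂ) (t : ℝ) : ℂ :=
  ((2 * Real.pi)⁻¹ : ℝ) • ∫ τ : ℝ, Complex.exp (Complex.I * ((t * τ : ℝ) : ℂ)) * f τ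

/-- `ℓ_q`-norm (`0 < q ≤ ∞`) of a sequence of extended nonnegative reals. -/
def ellqNorm (q : ℝ≥0∞) (b : ℕ → ℝ≥0∞) : ℝ≥0∞ :=
  if q = ∞ then ⨆ j, b j else (∑' j, b j ^ q.toReal) ^ (1 / q.toReal)

/-- The weight `2^{s j}` as an extended nonnegative real. -/
def tw (s : ℝ) (j : ℕ) : ℝ≥0∞ := ENNReal.ofReal ((2 : ℝ) ^ (s * (j : ℝ)))

/-- `1/p ∈ ℝ` for `p ∈ (0,∞]`. -/
def iv (p : ℝ≥0∞) : ℝ := p⁻¹.toReal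

/-- An admissible Littlewood–Paley generating function `Ψ`. -/
def GoodPsi (Ψ : ℝ → ℝ) : Prop :=
  ContDiff ℝ (⊤ : ℕ∞) Ψ ∧ (∀ t : ℝ, t ≤ 11 / 10 → Ψ t = 1) ∧ (∀ t : ℝ, 13 / 10 ≤ t → Ψ t = 0)

/-- The `j`-th Littlewood–Paley symbol `Φ_j(ξ) = Ψ(2^{-j}|ξ|) − Ψ(2^{1-j}|ξ|)` (with
`Ψ_{-1} = 0`). -/
def LPsym (Ψ : ℝ → ℝ) {m : ℕ} (j : ℕ) (ξ : Eu m) : ℝ :=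
  Ψ ((2 : ℝ) ^ (-(j : ℝ)) * eun ξ) - (if j = 0 then 0 else Ψ ((2 : ℝ) ^ (1 - (j : ℝ)) * eun ξ))

/-- `Φs` is the Littlewood–Paley partition of unity built from `Ψ`, realised as a family
of Schwartz functions. -/
def IsLP (Ψ : ℝ → ℝ) {m : ℕ} (Φs : ℕ → SchwartzMap (Eu m) ℂ) : Prop :=
  ∀ j ξ, Φs j ξ = (LPsym Ψ j ξ : ℂ)

/-- The tempered distribution `T` is represented by the function `g`. -/
def Represents {m : ℕ} (T : TD m) (g : Eu m → ℂ) : Prop :=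
  ∀ φ : SchwartzMap (Eu m) ℂ, T φ = ∫ x, g x * φ x

/-- `g` is (the continuous function representing) the Littlewood–Paley piece
`ℱ^{-1}(Φ_j ℱu)` of the tempered distribution `u`:  for every Schwartz `φ`, writing
`ψ = ℱ^{-1}φ` and `χ = ℱ(Φ_j ψ)` (as Schwartz functions), one has `⟨u, χ⟩ = ∫ g φ`. -/
def IsLPpiece {m : ℕ} (Φj : SchwartzMap (Eu m) ℂ) (u : TD m) (g : Eu m → ℂ) : Prop :=
  Continuous g ∧
    ∀ φ ψ χ : SchwartzMap (Eu m) ℂ,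
      (∀ x, ψ x = pFinv (fun y => φ y) x) →
      (∀ ξ, χ ξ = pF (fun η => Φj η * ψ η) ξ) →
      u χ = ∫ x, g x * φ x

open Classical in
/-- The Littlewood–Paley piece `ℱ^{-1}(Φ_j ℱu)` of a tempered distribution, as a
function (via choice of the continuous representative). -/
def LPfun {m : ℕ} (Φj : SchwartzMap (Eu m) ℂ) (u : TD m) : Eu m → ℂ :=
  if h : ∃ g, IsLPpiece Φj u g then h.choose else 0

/-- Besov quasi-norm of a sequence of (Littlewood–Paley) functions. -/
def besovNormSeq {m : ℕ} (s : ℝ) (p q : ℝ≥0∞) (g : ℕ → Eu m → ℂ) : ℝ≥0∞ :=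
  ellqNorm q fun j => tw s j * eLpNorm (g j) p volume

/-- Triebel–Lizorkin quasi-norm of a sequence of (Littlewood–Paley) functions. -/
def tlNormSeq {m : ℕ} (s : ℝ) (p q : ℝ≥0∞) (g : ℕ → Eu m → ℂ) : ℝ≥0∞ :=
  (∫⁻ x, (ellqNorm q fun j => tw s j * (‖g j x‖₊ : ℝ≥0∞)) ^ p.toReal ∂volume) ^ (1 / p.toReal)

/-- Besov quasi-norm `‖u‖_{B^s_{p,q}}` of a tempered distribution. -/
def besovNormD {m : ℕ} (Φs : ℕ → SchwartzMap (Eu m) ℂ) (s : ℝ) (p q : ℝ≥0∞) (u : TD m) :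
    ℝ≥0∞ :=
  besovNormSeq s p q fun j => LPfun (Φs j) u

/-- Triebel–Lizorkin quasi-norm `‖u‖_{F^s_{p,q}}` of a tempered distribution. -/
def tlNormD {m : ℕ} (Φs : ℕ → SchwartzMap (Eu m) ℂ) (s : ℝ) (p q : ℝ≥0∞) (u : TD m) :
    ℝ≥0∞ :=
  tlNormSeq s p q fun j => LPfun (Φs j) u

/-- The open upper half-space `ℝ^{m+1}_+ = {x : x_n > 0}`. -/
def upperH (m : ℕ) : Set (Eu (m + 1)) := {x | 0 < x (Fin.last m)}

/-- `w ∈ 𝒮'(ℝ^{m+1})` agrees with the function `f` on the open half-space `ℝ^{m+1}_+`. -/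
def RestrictsTo {m : ℕ} (w : TD (m + 1)) (f : Eu (m + 1) → ℂ) : Prop :=
  ∀ φ : SchwartzMap (Eu (m + 1)) ℂ, HasCompactSupport (φ : Eu (m + 1) → ℂ) →
    tsupport (φ : Eu (m + 1) → ℂ) ⊆ upperH m → w φ = ∫ x, f x * φ x

/-- Two tempered distributions agree on the open upper half-space. -/
def AgreeOnUpper {m : ℕ} (w v : TD (m + 1)) : Prop :=
  ∀ φ : SchwartzMap (Eu (m + 1)) ℂ, HasCompactSupport (φ : Eu (m + 1) → ℂ) →
    tsupport (φ : Eu (m + 1) → ℂ) ⊆ upperH m → w φ = v φ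

/-- `‖f‖_{B^s_{p,q}(ℝ̄^{m+1}_+)}`: infimum of the Besov norms of all distributional
extensions of (the restriction to the half-space of) the function `f`. -/
def bHalfNormF {m : ℕ} (Φs : ℕ → SchwartzMap (Eu (m + 1)) ℂ) (s : ℝ) (p q : ℝ≥0∞)
    (f : Eu (m + 1) → ℂ) : ℝ≥0∞ :=
  ⨅ (w : TD (m + 1)) (_ : RestrictsTo w f), besovNormD Φs s p q w

/-- `‖f‖_{F^s_{p,q}(ℝ̄^{m+1}_+)}`. -/
def tlHalfNormF {m : ℕ} (Φs : ℕ → SchwartzMap (Eu (m + 1)) ℂ) (s : ℝ) (p q : ℝ≥0∞)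
    (f : Eu (m + 1) → ℂ) : ℝ≥0∞ :=
  ⨅ (w : TD (m + 1)) (_ : RestrictsTo w f), tlNormD Φs s p q w

/-- `‖v‖_{B^s_{p,q}(ℝ̄^{m+1}_+)}` for a tempered distribution `v`. -/
def bHalfNormD {m : ℕ} (Φs : ℕ → SchwartzMap (Eu (m + 1)) ℂ) (s : ℝ) (p q : ℝ≥0∞)
    (v : TD (m + 1)) : ℝ≥0∞ :=
  ⨅ (w : TD (m + 1)) (_ : AgreeOnUpper w v), besovNormD Φs s p q w

/-- `‖v‖_{F^s_{p,q}(ℝ̄^{m+1}_+)}` for a tempered distribution `v`. -/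
def tlHalfNormD {m : ℕ} (Φs : ℕ → SchwartzMap (Eu (m + 1)) ℂ) (s : ℝ) (p q : ℝ≥0∞)
    (v : TD (m + 1)) : ℝ≥0∞ :=
  ⨅ (w : TD (m + 1)) (_ : AgreeOnUpper w v), tlNormD Φs s p q w

/-- Partial derivative in the `i`-th coordinate. -/
def cDeriv {k : ℕ} (i : Fin k) (f : Eu k → ℂ) : Eu k → ℂ :=
  fun x => deriv (fun t => f (Function.update x i t)) (x i)

/-- Iterated partial derivative `∂^α` for a multi-index `α`. -/
def mDeriv {k : ℕ} (α : Fin k → ℕ) (f : Eu k → ℂ) : Eu k → ℂ :=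
  (List.finRange k).foldr (fun i g => (cDeriv i)^[α i] g) f

/-- Length `|α| = ∑ αᵢ` of a multi-index. -/
def degS {k : ℕ} (α : Fin k → ℕ) : ℕ := ∑ i, α i

/-- `D^α = (-i)^{|α|} ∂^α`. -/
def mD {k : ℕ} (α : Fin k → ℕ) (f : Eu k → ℂ) : Eu k → ℂ :=
  fun x => (-Complex.I) ^ degS α * mDeriv α f x

/-- Monomial `x^α`. -/
def monom {k : ℕ} (α : Fin k → ℕ) (x : Eu k) : ℂ := ∏ i, (x i : ℂ) ^ α i

/-- `D^β_x D^α_ξ a(x, ξ)` for a symbol `a`. -/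
def symD {k : ℕ} (α β : Fin k → ℕ) (a : Eu k → Eu k → ℂ) (x ξ : Eu k) : ℂ :=
  mD β (fun y => mD α (a y) ξ) x

/-- The Hörmander class `S^d_{1,0}(ℝ^k × ℝ^k)` of uniformly estimated symbols. -/
def IsSymbol {k : ℕ} (d : ℝ) (a : Eu k → Eu k → ℂ) : Prop :=
  ContDiff ℝ (⊤ : ℕ∞) (fun z : Eu k × Eu k => a z.1 z.2) ∧
    ∀ α β : Fin k → ℕ, ∃ C : ℝ, ∀ x ξ, ‖symD α β a x ξ‖ ≤ C * jap ξ ^ (d - (degS α : ℝ))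

/-- `k` is the inverse Fourier transform in `ξ_n` of `ξ_n ↦ D^α_ξ D^β_x a(x',0,ξ',ξ_n)`
away from `z_n = 0`, smooth there. -/
def TCkernel {m : ℕ} (a : Eu (m + 1) → Eu (m + 1) → ℂ) (α β : Fin (m + 1) → ℕ)
    (k : Eu m → ℝ → Eu m → ℂ) : Prop :=
  (∀ x' ξ', ContDiffOn ℝ (⊤ : ℕ∞) (fun t => k x' t ξ') {t : ℝ | t ≠ 0}) ∧
    ∀ (x' ξ' : Eu m) (φ : ℝ → ℂ), ContDiff ℝ (⊤ : ℕ∞) φ → HasCompactSupport φ →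
      tsupport φ ⊆ {t : ℝ | t ≠ 0} →
      (∫ τ : ℝ, symD α β a (Fin.snoc x' 0) (Fin.snoc ξ' τ) * pFinv1 φ τ) =
        ∫ t : ℝ, k x' t ξ' * φ t

/-- The uniform two-sided transmission condition at `x_n = 0`. -/
def HasUTTC {m : ℕ} (a : Eu (m + 1) → Eu (m + 1) → ℂ) : Prop :=
  ∀ α β : Fin (m + 1) → ℕ, ∃ k : Eu m → ℝ → Eu m → ℂ, TCkernel a α β k ∧
    ∀ (l mm : ℕ) (ξ' : Eu m), ∃ C : ℝ, ∀ (x' : Eu m) (t : ℝ), t ≠ 0 →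
      ‖(t : ℂ) ^ l * iteratedDeriv mm (fun u => k x' u ξ') t‖ ≤ C

/-- `t^l D^m_t D^{α'}_{ξ'} D^{β'}_{x'} k̃(x', t, ξ')`, the `t`-derivatives being taken
within `[0,∞)`. -/
def pkDeriv {m : ℕ} (α' β' : Fin m → ℕ) (l mm : ℕ) (k : Eu m → ℝ → Eu m → ℂ)
    (x' : Eu m) (t : ℝ) (ξ' : Eu m) : ℂ :=
  (t : ℂ) ^ l *
    iteratedDerivWithin mm
      (fun u => mDeriv β' (fun y => mDeriv α' (fun η => k y u η) ξ') x') (Set.Ici 0) t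

/-- The seminorm `sup ⟨ξ'⟩^{-(μ+1-|α'|-l+m)} |t^l D^m_t D^{α'}_{ξ'} D^{β'}_{x'} k̃|` of a
Poisson/trace symbol-kernel. -/
def pkSemiE {m : ℕ} (μ : ℝ) (α' β' : Fin m → ℕ) (l mm : ℕ) (k : Eu m → ℝ → Eu m → ℂ) :
    ℝ≥0∞ :=
  ⨆ (x' : Eu m) (ξ' : Eu m) (t : Set.Ici (0 : ℝ)),
    ENNReal.ofReal
      (jap ξ' ^ (-(μ + 1 - (degS α' : ℝ) - (l : ℝ) + (mm : ℝ))) *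
        ‖pkDeriv α' β' l mm k x' t ξ'‖)

/-- Membership in the symbol-kernel class `S^μ_{1,0}(ℝ^m × ℝ^m, 𝒮(ℝ̄₊))`. -/
def InPK {m : ℕ} (μ : ℝ) (k : Eu m → ℝ → Eu m → ℂ) : Prop :=
  ContDiffOn ℝ (⊤ : ℕ∞) (fun z : (Eu m × ℝ) × Eu m => k z.1.1 z.1.2 z.2) {z | 0 ≤ z.1.2} ∧
    ∀ (α' β' : Fin m → ℕ) (l mm : ℕ), pkSemiE μ α' β' l mm k ≠ ∞

/-- `‖k̃‖_{(N)}`: maximum of the symbol-kernel seminorms over all indices `≤ N`. -/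
def pkNormN {m : ℕ} (μ : ℝ) (N : ℕ) (k : Eu m → ℝ → Eu m → ℂ) : ℝ≥0∞ :=
  ⨆ (α' : Fin m → ℕ) (_ : degS α' ≤ N) (β' : Fin m → ℕ) (_ : degS β' ≤ N)
    (l : ℕ) (_ : l ≤ N) (mm : ℕ) (_ : mm ≤ N), pkSemiE μ α' β' l mm k

/-- `x_n^l D^m_{x_n} y_n^{l'} D^{m'}_{y_n} D^{α'}_{ξ'} D^{β'}_{x'} g̃`, the normal
derivatives being taken within `[0,∞)`. -/
def sgDeriv {m : ℕ} (α' β' : Fin m → ℕ) (l mm l' mm' : ℕ)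
    (g : Eu m → ℝ → ℝ → Eu m → ℂ) (x' : Eu m) (s t : ℝ) (ξ' : Eu m) : ℂ :=
  (s : ℂ) ^ l * (t : ℂ) ^ l' *
    iteratedDerivWithin mm
      (fun u =>
        iteratedDerivWithin mm'
          (fun v => mDeriv β' (fun y => mDeriv α' (fun η => g y u v η) ξ') x')
          (Set.Ici 0) t)
      (Set.Ici 0) s

/-- Singular Green symbol-kernel seminorm. -/
def sgSemiE {m : ℕ} (d : ℝ) (α' β' : Fin m → ℕ) (l mm l' mm' : ℕ)
    (g : Eu m → ℝ → ℝ → Eu m → ℂ) : ℝ≥0∞ :=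
  ⨆ (x' : Eu m) (ξ' : Eu m) (s : Set.Ici (0 : ℝ)) (t : Set.Ici (0 : ℝ)),
    ENNReal.ofReal
      (jap ξ' ^
          (-(d + 1 - (degS α' : ℝ) - (l : ℝ) + (mm : ℝ) - (l' : ℝ) + (mm' : ℝ))) *
        ‖sgDeriv α' β' l mm l' mm' g x' s t ξ'‖)

/-- Membership in the singular Green symbol-kernel class
`S^{d-1}_{1,0}(ℝ^m × ℝ^m, 𝒮(ℝ̄²₊₊))` (for operators of order `d`). -/
def InSG {m : ℕ} (d : ℝ) (g : Eu m → ℝ → ℝ → Eu m → ℂ) : Prop :=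
  ContDiffOn ℝ (⊤ : ℕ∞) (fun z : ((Eu m × ℝ) × ℝ) × Eu m => g z.1.1.1 z.1.1.2 z.1.2 z.2)
      {z | 0 ≤ z.1.1.2 ∧ 0 ≤ z.1.2} ∧
    ∀ (α' β' : Fin m → ℕ) (l mm l' mm' : ℕ), sgSemiE d α' β' l mm l' mm' g ≠ ∞

/-- `‖g̃‖_{(N)}`. -/
def sgNormN {m : ℕ} (d : ℝ) (N : ℕ) (g : Eu m → ℝ → ℝ → Eu m → ℂ) : ℝ≥0∞ :=
  ⨆ (α' : Fin m → ℕ) (_ : degS α' ≤ N) (β' : Fin m → ℕ) (_ : degS β' ≤ N)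
    (l : ℕ) (_ : l ≤ N) (mm : ℕ) (_ : mm ≤ N) (l' : ℕ) (_ : l' ≤ N) (mm' : ℕ)
    (_ : mm' ≤ N), sgSemiE d α' β' l mm l' mm' g

/-- The Poisson operator `OPK(k̃)v(x', x_n) = (2π)^{1-n} ∫ e^{i x'·ξ'} k̃(x',x_n,ξ') ℱv(ξ') dξ'`. -/
def OPK {m : ℕ} (k : Eu m → ℝ → Eu m → ℂ) (v : Eu m → ℂ) : Eu (m + 1) → ℂ :=
  fun x =>
    (((2 * Real.pi) ^ m : ℝ)⁻¹) •
      ∫ ξ' : Eu m,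
        Complex.exp (Complex.I * (dotp (Fin.init x) ξ' : ℂ)) *
          (k (Fin.init x) (x (Fin.last m)) ξ' * pF v ξ')

/-- The partial Fourier transform `ú(ξ', y_n)` of `u(y', y_n)` in `y'`. -/
def hatu {m : ℕ} (u : Eu (m + 1) → ℂ) (ξ' : Eu m) (t : ℝ) : ℂ :=
  ∫ y' : Eu m, Complex.exp (-(Complex.I * (dotp y' ξ' : ℂ))) * u (Fin.snoc y' t)

/-- The class-0 trace operator
`OPT(t̃)u(x') = (2π)^{1-n} ∫∫ e^{i x'·ξ'} t̃(x',y_n,ξ') ú(ξ',y_n) dy_n dξ'`. -/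
def OPT {m : ℕ} (tk : Eu m → ℝ → Eu m → ℂ) (u : Eu (m + 1) → ℂ) : Eu m → ℂ :=
  fun x' =>
    (((2 * Real.pi) ^ m : ℝ)⁻¹) •
      ∫ ξ' : Eu m, ∫ t in Set.Ioi (0 : ℝ),
        Complex.exp (Complex.I * (dotp x' ξ' : ℂ)) * (tk x' t ξ' * hatu u ξ' t)

/-- The class-0 singular Green operator
`OPG(g̃)u(x',x_n) = (2π)^{1-n} ∫∫ e^{i x'·ξ'} g̃(x',x_n,y_n,ξ') ú(ξ',y_n) dy_n dξ'`. -/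
def OPG {m : ℕ} (g : Eu m → ℝ → ℝ → Eu m → ℂ) (u : Eu (m + 1) → ℂ) : Eu (m + 1) → ℂ :=
  fun x =>
    (((2 * Real.pi) ^ m : ℝ)⁻¹) •
      ∫ ξ' : Eu m, ∫ t in Set.Ioi (0 : ℝ),
        Complex.exp (Complex.I * (dotp (Fin.init x) ξ' : ℂ)) *
          (g (Fin.init x) (x (Fin.last m)) t ξ' * hatu u ξ' t)

/-- Half-space multi-index derivative: the `x_n`-derivatives are taken within `[0,∞)`,
the tangential ones in the full space. -/
def hDeriv {m : ℕ} (β : Fin (m + 1) → ℕ) (f : Eu (m + 1) → ℂ) (x : Eu (m + 1)) : ℂ :=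
  iteratedDerivWithin (β (Fin.last m))
    (fun t =>
      mDeriv (fun i : Fin m => β i.castSucc) (fun y : Eu m => f (Fin.snoc y t))
        (Fin.init x))
    (Set.Ici 0) (x (Fin.last m))

/-- The Schwartz seminorm `‖u‖_{𝒮,N} = max_{|γ|,|δ| ≤ N} sup |y^γ D^δ u|`. -/
def swSemi {k : ℕ} (N : ℕ) (u : Eu k → ℂ) : ℝ≥0∞ :=
  ⨆ (γ : Fin k → ℕ) (_ : degS γ ≤ N) (δ : Fin k → ℕ) (_ : degS δ ≤ N) (y : Eu k),
    ENNReal.ofReal ‖monom γ y * mDeriv δ u y‖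

/-- `supp ℱf ⊆ S` for a (polynomially bounded, continuous) function `f`:  the pairing
`⟨ℱf, φ⟩ = ∫ f ℱφ` vanishes for every Schwartz `φ` with support disjoint from `S`. -/
def FsuppIn {m : ℕ} (f : Eu m → ℂ) (S : Set (Eu m)) : Prop :=
  ∀ φ : SchwartzMap (Eu m) ℂ, Disjoint (tsupport (φ : Eu m → ℂ)) S →
    (∫ x, f x * pF (fun y => φ y) x) = 0

/-- The one-sided trace `γ_j v (x') = ((-i ∂_{x_n})^j v)(x', 0)`. -/
def traceJ {m : ℕ} (j : ℕ) (v : Eu (m + 1) → ℂ) (x' : Eu m) : ℂ :=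
  (-Complex.I) ^ j * iteratedDeriv j (fun t => v (Fin.snoc x' t)) 0

/-! ### Brackets and integrable weights -/

/-- The product bracket `∏ⱼ (1 + zⱼ²)`; it dominates `⟨z⟩²` and its inverse is integrable. -/
def Pj {m : ℕ} (z : Eu m) : ℝ := ∏ j, (1 + z j ^ 2)

/-- The integrable weight `∏ⱼ (1 + zⱼ²)⁻¹`. -/
def Om {m : ℕ} (z : Eu m) : ℝ := (Pj z)⁻¹

lemma Pj_one_le {m : ℕ} (z : Eu m) : 1 ≤ Pj z := by
  unfold Pj
  refine Finset.prod_induction _ (fun x : ℝ => 1 ≤ x) (fun a b => one_le_mul_of_one_le_of_one_le)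
    le_rfl fun i _ => ?_
  nlinarith [sq_nonneg (z i)]

lemma Pj_pos {m : ℕ} (z : Eu m) : 0 < Pj z := lt_of_lt_of_le one_pos (Pj_one_le z)

lemma Om_pos {m : ℕ} (z : Eu m) : 0 < Om z := inv_pos.mpr (Pj_pos z)

lemma Om_nonneg {m : ℕ} (z : Eu m) : 0 ≤ Om z := (Om_pos z).le

lemma Om_le_one {m : ℕ} (z : Eu m) : Om z ≤ 1 := inv_le_one_of_one_le₀ (Pj_one_le z)

lemma Pj_mul_Om {m : ℕ} (z : Eu m) : Pj z * Om z = 1 := mul_inv_cancel₀ (Pj_pos z).ne'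

lemma Pj_continuous {m : ℕ} : Continuous (Pj : Eu m → ℝ) := by
  unfold Pj; fun_prop

lemma Om_continuous {m : ℕ} : Continuous (Om : Eu m → ℝ) :=
  Pj_continuous.inv₀ fun z => (Pj_pos z).ne'

lemma Om_integrable {m : ℕ} : Integrable (Om : Eu m → ℝ) := by
  have := Integrable.fintype_prod (ι := Fin m) (𝕜 := ℝ) (E := ℝ) (f := fun _ x => (1 + x ^ 2)⁻¹)
    (μ := fun _ => volume) (fun _ => integrable_inv_one_add_sq)
  refine this.congr (Eventually.of_forall fun z => ?_)
  simp [Om, Pj]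

lemma Pj_add_le {m : ℕ} (a b : Eu m) : Pj (a + b) ≤ 2 ^ m * Pj a * Pj b := by
  have : (2 : ℝ) ^ m * Pj a * Pj b = ∏ j, (2 * (1 + a j ^ 2) * (1 + b j ^ 2)) := by
    simp [Pj, Finset.prod_mul_distrib]
  rw [this]
  unfold Pj
  apply Finset.prod_le_prod
  · intro i _; positivity
  · intro i _
    simp only [Pi.add_apply]
    nlinarith [sq_nonneg (a i - b i), mul_nonneg (sq_nonneg (a i)) (sq_nonneg (b i))]

lemma jap_one_le {m : ℕ} (z : Eu m) : 1 ≤ jap z := by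
  unfold jap
  rw [Real.one_le_sqrt]
  have : 0 ≤ ∑ i, z i ^ 2 := Finset.sum_nonneg fun i _ => sq_nonneg _
  linarith

lemma jap_pos {m : ℕ} (z : Eu m) : 0 < jap z := lt_of_lt_of_le one_pos (jap_one_le z)

lemma jap_sq {m : ℕ} (z : Eu m) : jap z ^ 2 = 1 + ∑ i, z i ^ 2 := by
  unfold jap
  rw [Real.sq_sqrt]
  have : 0 ≤ ∑ i, z i ^ 2 := Finset.sum_nonneg fun i _ => sq_nonneg _
  linarith

lemma jap_continuous {m : ℕ} : Continuous (jap : Eu m → ℝ) := by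
  unfold jap; fun_prop

lemma one_add_sum_le_prod {ι : Type*} (s : Finset ι) (f : ι → ℝ) (hf : ∀ i, 0 ≤ f i) :
    1 + ∑ i ∈ s, f i ≤ ∏ i ∈ s, (1 + f i) := by
  classical
  induction s using Finset.induction_on with
  | empty => simp
  | insert a s ha ih =>
    rw [Finset.sum_insert ha, Finset.prod_insert ha]
    have h1 : 0 ≤ ∑ i ∈ s, f i := Finset.sum_nonneg fun i _ => hf i
    nlinarith [hf a, mul_nonneg (hf a) h1]

lemma jap_le_Pj {m : ℕ} (z : Eu m) : jap z ≤ Pj z := by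
  have h1 : jap z ^ 2 ≤ Pj z := by
    rw [jap_sq]; exact one_add_sum_le_prod _ _ fun i => sq_nonneg _
  nlinarith [jap_one_le z]

lemma jap_add_le {m : ℕ} (a b : Eu m) : jap (a + b) ≤ 2 * Pj b * jap a := by
  have h : jap (a + b) ≤ 2 * jap b * jap a := by
    refine abs_le_of_sq_le_sq' ?_ (by have := jap_pos a; have := jap_pos b; positivity) |>.2
    rw [mul_pow, mul_pow, jap_sq, jap_sq, jap_sq]
    have h1 : ∑ i, (a + b) i ^ 2 ≤ 2 * ∑ i, a i ^ 2 + 2 * ∑ i, b i ^ 2 := by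
      rw [Finset.mul_sum, Finset.mul_sum, ← Finset.sum_add_distrib]
      refine Finset.sum_le_sum fun i _ => ?_
      simp only [Pi.add_apply]
      nlinarith [sq_nonneg (a i - b i)]
    have ha : 0 ≤ ∑ i, a i ^ 2 := Finset.sum_nonneg fun i _ => sq_nonneg _
    have hb : 0 ≤ ∑ i, b i ^ 2 := Finset.sum_nonneg fun i _ => sq_nonneg _
    nlinarith [mul_nonneg ha hb]
  refine h.trans ?_
  gcongr
  · exact (jap_pos a).le
  · exact jap_le_Pj b

/-- Peetre's inequality, with a polynomial loss in `ζ`. -/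
lemma peetre {m : ℕ} (s : ℝ) (n : ℕ) (hn : |s| ≤ n) (η ζ : Eu m) :
    jap (η + ζ) ^ s ≤ (2 * Pj ζ) ^ n * jap η ^ s := by
  have h2 : 1 ≤ 2 * Pj ζ := by linarith [Pj_one_le ζ]
  have key : (2 * Pj ζ) ^ |s| ≤ (2 * Pj ζ) ^ n := by
    rw [← Real.rpow_natCast]
    exact Real.rpow_le_rpow_of_exponent_le h2 hn
  have hp : 0 < jap η ^ s := Real.rpow_pos_of_pos (jap_pos η) s
  suffices h : jap (η + ζ) ^ s ≤ (2 * Pj ζ) ^ |s| * jap η ^ s from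
    h.trans (mul_le_mul_of_nonneg_right key hp.le)
  rcases le_total 0 s with hs | hs
  · rw [abs_of_nonneg hs, ← Real.mul_rpow (by linarith) (jap_pos η).le]
    exact Real.rpow_le_rpow (jap_pos _).le (jap_add_le η ζ) hs
  · have h3 : jap η ≤ 2 * Pj ζ * jap (η + ζ) := by
      have := jap_add_le (η + ζ) (-ζ)
      rw [add_neg_cancel_right] at this
      simpa [Pj] using this
    have h4 : (2 * Pj ζ * jap (η + ζ)) ^ s ≤ jap η ^ s :=
      Real.rpow_le_rpow_of_nonpos (jap_pos η) h3 hs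
    rw [Real.mul_rpow (by linarith) (jap_pos _).le] at h4
    rw [abs_of_nonpos hs, Real.rpow_neg (by linarith)]
    have h5 : 0 < (2 * Pj ζ) ^ s := Real.rpow_pos_of_pos (by linarith) s
    rw [inv_mul_eq_div, le_div_iff₀ h5, mul_comm]
    exact h4

lemma jap_rpow_le_Pj {m : ℕ} (s : ℝ) (n : ℕ) (hn : |s| ≤ n) (z : Eu m) :
    jap z ^ s ≤ Pj z ^ n := by
  calc jap z ^ s ≤ jap z ^ (n : ℝ) :=
        Real.rpow_le_rpow_of_exponent_le (jap_one_le z) ((le_abs_self s).trans hn)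
    _ = jap z ^ n := Real.rpow_natCast _ _
    _ ≤ _ := pow_le_pow_left₀ (jap_pos z).le (jap_le_Pj z) n

/-! ### Families of smooth functions with a common weight -/

/-- The partial derivative `∂ⱼ g` on `ℝ^m`. -/
def pd {m : ℕ} (j : Fin m) (g : Eu m → ℂ) (z : Eu m) : ℂ := fderiv ℝ g z (Pi.single j 1)

/-- All derivatives of order at most `n` of the family `f` are dominated by the weight `ω`,
uniformly in the parameter. -/
def WtN {m : ℕ} {P : Type*} : ℕ → (P → Eu m → ℂ) → (P → Eu m → ℝ) → Prop
  | 0, f, ω => ∃ C : ℝ, ∀ p z, ‖f p z‖ ≤ C * ω p z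
  | n + 1, f, ω => (∃ C : ℝ, ∀ p z, ‖f p z‖ ≤ C * ω p z) ∧ ∀ j, WtN n (fun p => pd j (f p)) ω

/-- A family of smooth functions all of whose derivatives are dominated by the weight `ω`. -/
structure Wt {m : ℕ} {P : Type*} (f : P → Eu m → ℂ) (ω : P → Eu m → ℝ) : Prop where
  smooth : ∀ p, ContDiff ℝ (⊤ : ℕ∞) (f p)
  bdN : ∀ n, WtN n f ω

lemma pd_smooth {m : ℕ} {g : Eu m → ℂ} (hg : ContDiff ℝ (⊤ : ℕ∞) g) (j : Fin m) :
    ContDiff ℝ (⊤ : ℕ∞) (pd j g) :=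
  (hg.fderiv_right (m := (⊤ : ℕ∞)) (by simp)).clm_apply contDiff_const

namespace Wt
variable {m : ℕ} {P : Type*} {f g : P → Eu m → ℂ} {ω ω₁ ω₂ : P → Eu m → ℝ}

lemma bd (h : Wt f ω) : ∃ C : ℝ, ∀ p z, ‖f p z‖ ≤ C * ω p z := h.bdN 0

lemma pd (h : Wt f ω) (j : Fin m) : Wt (fun p => _root_.pd j (f p)) ω :=
  ⟨fun p => pd_smooth (h.smooth p) j, fun n => (h.bdN (n + 1)).2 j⟩

lemma differentiable (h : Wt f ω) (p : P) : Differentiable ℝ (f p) :=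
  (h.smooth p).differentiable (by simp)

/-- Coinductive introduction rule: a class of pairs of families and weights that consists of
smooth dominated families and is stable under differentiation consists of `Wt` families. -/
lemma of_class (K : (P → Eu m → ℂ) → Prop) (hs : ∀ f, K f → ∀ p, ContDiff ℝ (⊤ : ℕ∞) (f p))
    (hb : ∀ f, K f → ∃ C : ℝ, ∀ p z, ‖f p z‖ ≤ C * ω p z)
    (hd : ∀ f, K f → ∀ j, K (fun p => _root_.pd j (f p))) {f : P → Eu m → ℂ} (hf : K f) :
    Wt f ω := by
  refine ⟨hs f hf, fun n => ?_⟩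
  induction n generalizing f with
  | zero => exact hb f hf
  | succ n ih => exact ⟨hb f hf, fun j => ih (hd f hf j)⟩

lemma add (hf : Wt f ω) (hg : Wt g ω) : Wt (fun p z => f p z + g p z) ω := by
  refine of_class (fun h => ∃ f g, Wt f ω ∧ Wt g ω ∧ h = fun p z => f p z + g p z) ?_ ?_ ?_
    ⟨f, g, hf, hg, rfl⟩
  · rintro _ ⟨f, g, hf, hg, rfl⟩ p
    exact (hf.smooth p).add (hg.smooth p)
  · rintro _ ⟨f, g, hf, hg, rfl⟩
    obtain ⟨C, hC⟩ := hf.bd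
    obtain ⟨D, hD⟩ := hg.bd
    refine ⟨C + D, fun p z => (norm_add_le _ _).trans ?_⟩
    rw [add_mul]; exact add_le_add (hC p z) (hD p z)
  · rintro _ ⟨f, g, hf, hg, rfl⟩ j
    refine ⟨_, _, hf.pd j, hg.pd j, ?_⟩
    funext p z
    simp only [_root_.pd]
    rw [fderiv_fun_add (hf.differentiable p z) (hg.differentiable p z)]
    rfl

lemma mono (hf : Wt f ω₁) (h0 : ∀ p z, 0 ≤ ω₁ p z) (K : ℝ) (h : ∀ p z, ω₁ p z ≤ K * ω₂ p z) :
    Wt f ω₂ := by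
  refine of_class (fun f => Wt f ω₁) (fun f hf => hf.smooth) ?_ (fun f hf j => hf.pd j) hf
  intro f hf
  obtain ⟨C, hC⟩ := hf.bd
  refine ⟨|C| * K, fun p z => (hC p z).trans ?_⟩
  calc C * ω₁ p z ≤ |C| * ω₁ p z := mul_le_mul_of_nonneg_right (le_abs_self C) (h0 p z)
    _ ≤ |C| * (K * ω₂ p z) := mul_le_mul_of_nonneg_left (h p z) (abs_nonneg C)
    _ = _ := by ring

lemma comp {Q : Type*} (hf : Wt f ω) (q : Q → P) : Wt (fun p => f (q p)) (fun p => ω (q p)) := by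
  refine of_class (fun g => ∃ f, Wt f ω ∧ g = fun p => f (q p)) ?_ ?_ ?_ ⟨f, hf, rfl⟩
  · rintro _ ⟨f, hf, rfl⟩ p; exact hf.smooth _
  · rintro _ ⟨f, hf, rfl⟩
    obtain ⟨C, hC⟩ := hf.bd
    exact ⟨C, fun p z => hC _ z⟩
  · rintro _ ⟨f, hf, rfl⟩ j
    exact ⟨_, hf.pd j, rfl⟩

/-- Products of dominated families are dominated by the product weight. The Leibniz rule is
applied one derivative at a time. -/
lemma mul (hf : Wt f ω₁) (hg : Wt g ω₂) :
    Wt (fun p z => f p z * g p z) (fun p z => ω₁ p z * ω₂ p z) := by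
  refine ⟨fun p => (hf.smooth p).mul (hg.smooth p), fun n => ?_⟩
  have base : ∀ {f g : P → Eu m → ℂ}, Wt f ω₁ → Wt g ω₂ →
      ∃ C : ℝ, ∀ p z, ‖f p z * g p z‖ ≤ C * (ω₁ p z * ω₂ p z) := by
    intro f g hf hg
    obtain ⟨C, hC⟩ := hf.bd
    obtain ⟨D, hD⟩ := hg.bd
    refine ⟨C * D, fun p z => ?_⟩
    rw [norm_mul]
    calc ‖f p z‖ * ‖g p z‖ ≤ (C * ω₁ p z) * (D * ω₂ p z) :=
          mul_le_mul (hC p z) (hD p z) (norm_nonneg _) ((norm_nonneg _).trans (hC p z))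
      _ = _ := by ring
  have addN : ∀ (n : ℕ) {f g : P → Eu m → ℂ} {ω : P → Eu m → ℝ},
      (∀ p, ContDiff ℝ (⊤ : ℕ∞) (f p)) → (∀ p, ContDiff ℝ (⊤ : ℕ∞) (g p)) →
      WtN n f ω → WtN n g ω → WtN n (fun p z => f p z + g p z) ω := by
    intro n
    have b : ∀ {f g : P → Eu m → ℂ} {ω : P → Eu m → ℝ},
        (∃ C : ℝ, ∀ p z, ‖f p z‖ ≤ C * ω p z) → (∃ C : ℝ, ∀ p z, ‖g p z‖ ≤ C * ω p z) →
        ∃ C : ℝ, ∀ p z, ‖f p z + g p z‖ ≤ C * ω p z := by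
      rintro f g ω ⟨C, hC⟩ ⟨D, hD⟩
      refine ⟨C + D, fun p z => (norm_add_le _ _).trans ?_⟩
      rw [add_mul]; exact add_le_add (hC p z) (hD p z)
    induction n with
    | zero => intro f g ω _ _ h1 h2; exact b h1 h2
    | succ n ih =>
      intro f g ω hf hg h1 h2
      refine ⟨b h1.1 h2.1, fun j => ?_⟩
      have := ih (fun p => pd_smooth (hf p) j) (fun p => pd_smooth (hg p) j) (h1.2 j) (h2.2 j)
      convert this using 1
      funext p z
      simp only [_root_.pd]
      rw [fderiv_fun_add ((hf p).differentiable (by simp) z) ((hg p).differentiable (by simp) z)]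
      rfl
  induction n generalizing f g with
  | zero => exact base hf hg
  | succ n ih =>
    refine ⟨base hf hg, fun j => ?_⟩
    have h1 := ih hf (hg.pd j)
    have h2 := ih (hf.pd j) hg
    have := addN n (fun p => (hf.smooth p).mul ((hg.pd j).smooth p))
      (fun p => ((hf.pd j).smooth p).mul (hg.smooth p)) h1 h2
    convert this using 1
    funext p z
    simp only [_root_.pd]
    rw [fderiv_fun_mul (hf.differentiable p z) (hg.differentiable p z)]
    simp [mul_comm]

end Wt

/-! ### Decay of Fourier transforms -/

/-- The character `e^{-i z·ζ}`. -/
def ek {m : ℕ} (z ζ : Eu m) : ℂ := Complex.exp (-(Complex.I * (dotp z ζ : ℂ)))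

lemma pF_eq {m : ℕ} (f : Eu m → ℂ) (ζ : Eu m) : pF f ζ = ∫ z, ek z ζ * f z := rfl

lemma norm_ek {m : ℕ} (z ζ : Eu m) : ‖ek z ζ‖ = 1 := by
  unfold ek
  rw [show -(Complex.I * (dotp z ζ : ℂ)) = ((-dotp z ζ : ℝ) : ℂ) * Complex.I by push_cast; ring]
  exact Complex.norm_exp_ofReal_mul_I _

lemma dotp_comm' {m : ℕ} (x y : Eu m) : dotp x y = dotp y x := by
  simp [dotp, mul_comm]

lemma ek_comm {m : ℕ} (x y : Eu m) : ek x y = ek y x := by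
  unfold ek; rw [dotp_comm']

lemma dotp_contDiff {m : ℕ} : ContDiff ℝ (⊤ : ℕ∞) (fun q : Eu m × Eu m => dotp q.1 q.2) := by
  unfold dotp; fun_prop

lemma ek_continuous {m : ℕ} : Continuous (fun q : Eu m × Eu m => ek q.1 q.2) := by
  unfold ek dotp; fun_prop

@[fun_prop]
lemma ek_cont {m : ℕ} {X : Type*} [TopologicalSpace X] {f g : X → Eu m} (hf : Continuous f)
    (hg : Continuous g) : Continuous fun x => ek (f x) (g x) :=
  ek_continuous.comp (hf.prodMk hg)

lemma ek_add_left {m : ℕ} (x y ζ : Eu m) : ek (x + y) ζ = ek x ζ * ek y ζ := by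
  unfold ek dotp
  rw [← Complex.exp_add]
  congr 1
  simp only [Pi.add_apply, add_mul, Finset.sum_add_distrib]
  push_cast; ring

lemma ek_neg_left {m : ℕ} (x ζ : Eu m) :
    ek (-x) ζ = Complex.exp (Complex.I * (dotp x ζ : ℂ)) := by
  unfold ek dotp
  congr 1
  simp

lemma ek_hasFDerivAt {m : ℕ} (z ζ : Eu m) :
    HasFDerivAt (fun z => ek z ζ)
      ((∑ j, (ContinuousLinearMap.proj (R := ℝ) (φ := fun _ : Fin m => ℝ) j).smulRight
        (-(Complex.I * (ζ j : ℂ)) * ek z ζ))) z := by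
  have h1 : HasFDerivAt (fun z : Eu m => -(Complex.I * (dotp z ζ : ℂ)))
      (∑ j, (ContinuousLinearMap.proj (R := ℝ) (φ := fun _ : Fin m => ℝ) j).smulRight
        (-(Complex.I * (ζ j : ℂ)))) z := by
    have : (fun z : Eu m => -(Complex.I * (dotp z ζ : ℂ))) =
        fun z => (∑ j, (ContinuousLinearMap.proj (R := ℝ) (φ := fun _ : Fin m => ℝ) j).smulRight
        (-(Complex.I * (ζ j : ℂ)))) z := by
      funext z
      simp only [dotp, _root_.sum_apply, ContinuousLinearMap.smulRight_apply,
        ContinuousLinearMap.proj_apply, Complex.real_smul]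
      push_cast
      rw [Finset.mul_sum, ← Finset.sum_neg_distrib]
      exact Finset.sum_congr rfl fun j _ => by ring
    rw [this]
    exact ContinuousLinearMap.hasFDerivAt _
  have h2 := h1.cexp
  refine h2.congr_fderiv ?_
  rw [Finset.smul_sum]
  refine Finset.sum_congr rfl fun j _ => ?_
  ext v
  simp [ek]; ring

lemma pd_ek {m : ℕ} (j : Fin m) (z ζ : Eu m) :
    fderiv ℝ (fun z => ek z ζ) z (Pi.single j 1) = -(Complex.I * (ζ j : ℂ)) * ek z ζ := by
  rw [(ek_hasFDerivAt z ζ).fderiv]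
  simp only [_root_.sum_apply, ContinuousLinearMap.smulRight_apply,
    ContinuousLinearMap.proj_apply]
  rw [Finset.sum_eq_single j]
  · simp
  · intro b _ hb; simp [hb]
  · simp

lemma integrable_ek_mul {m : ℕ} {g : Eu m → ℂ} (hg : Integrable g) (ζ : Eu m) :
    Integrable (fun z => ek z ζ * g z) :=
  hg.bdd_mul (c := 1) (by fun_prop) (Eventually.of_forall fun z => (norm_ek z ζ).le)

/-- Integration by parts: the Fourier transform turns `1 + ∂ⱼ` into multiplication by `1 + i ζⱼ`. -/
lemma pF_add_pd {m : ℕ} {g : Eu m → ℂ} (hs : ContDiff ℝ (⊤ : ℕ∞) g) (j : Fin m)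
    (hg : Integrable g) (hd : Integrable (pd j g)) (ζ : Eu m) :
    pF (fun z => g z + pd j g z) ζ = (1 + Complex.I * (ζ j : ℂ)) * pF g ζ := by
  have h1 := integral_mul_fderiv_eq_neg_fderiv_mul_of_integrable (μ := (volume : Measure (Eu m)))
    (f := fun z => ek z ζ) (g := g) (v := Pi.single j 1)
    (by
      simp only [pd_ek, mul_assoc]
      exact (integrable_ek_mul hg ζ).const_mul _)
    (integrable_ek_mul hd ζ) (integrable_ek_mul hg ζ)
    (fun x _ => (ek_hasFDerivAt x ζ).differentiableAt)
    (fun x _ => (hs.differentiable (by simp)) x)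
  simp only [pF_eq, mul_add]
  rw [integral_add (integrable_ek_mul hg ζ) (integrable_ek_mul hd ζ)]
  have h2 : ∫ z, ek z ζ * pd j g z = Complex.I * (ζ j : ℂ) * ∫ z, ek z ζ * g z := by
    change ∫ z, ek z ζ * fderiv ℝ g z (Pi.single j 1) = _
    rw [h1]
    simp only [pd_ek, mul_assoc]
    rw [integral_const_mul]
    simp only [neg_mul, mul_assoc]
    ring
  rw [h2]; ring

section decay
variable {m : ℕ} {P : Type*} {f : P → Eu m → ℂ} {B : P → ℝ}

lemma Wt.integrable (h : Wt f (fun p z => B p * Om z)) (p : P) : Integrable (f p) := by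
  obtain ⟨C, hC⟩ := h.bd
  exact ((Om_integrable.const_mul (B p)).const_mul C).mono'
    (h.smooth p).continuous.aestronglyMeasurable (Eventually.of_forall fun z => hC p z)

/-- Each application of `1 + ∂ⱼ` gains a factor `|1 + i ζⱼ|⁻¹`. -/
lemma Wt.decay_list (Q : List (Fin m)) : ∀ {f : P → Eu m → ℂ},
    Wt f (fun p z => B p * Om z) →
    ∃ C : ℝ, ∀ p ζ, ‖pF (f p) ζ‖ * (Q.map fun j => ‖1 + Complex.I * (ζ j : ℂ)‖).prod ≤ C * B p := by
  induction Q with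
  | nil =>
    intro f h
    obtain ⟨C, hC⟩ := h.bd
    refine ⟨C * ∫ z : Eu m, Om z, fun p ζ => ?_⟩
    simp only [List.map_nil, List.prod_nil, mul_one, pF_eq]
    refine (norm_integral_le_integral_norm _).trans ?_
    calc ∫ z, ‖ek z ζ * f p z‖ ≤ ∫ z, C * (B p * Om z) := by
          refine integral_mono_of_nonneg (Eventually.of_forall fun _ => norm_nonneg _)
            ((Om_integrable.const_mul (B p)).const_mul C) (Eventually.of_forall fun z => ?_)
          simp only [norm_mul, norm_ek, one_mul]
          exact hC p z
      _ = _ := by rw [integral_const_mul, integral_const_mul]; ring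
  | cons j Q ih =>
    intro f h
    obtain ⟨C, hC⟩ := ih (h.add (h.pd j))
    refine ⟨C, fun p ζ => ?_⟩
    have := hC p ζ
    rw [pF_add_pd (h.smooth p) j (h.integrable p) ((h.pd j).integrable p), norm_mul] at this
    simp only [List.map_cons, List.prod_cons]
    linarith

lemma norm_one_add_I_mul_sq (x : ℝ) : ‖1 + Complex.I * (x : ℂ)‖ * ‖1 + Complex.I * (x : ℂ)‖
    = 1 + x ^ 2 := by
  rw [Complex.norm_mul_self_eq_normSq, Complex.normSq_apply]
  simp; ring

lemma list_prod_eq_Pj_pow (ζ : Eu m) (R : ℕ) :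
    (((List.replicate R (List.finRange m ++ List.finRange m)).flatten).map
      fun j => ‖1 + Complex.I * (ζ j : ℂ)‖).prod = Pj ζ ^ R := by
  induction R with
  | zero => simp
  | succ R ih =>
    rw [List.replicate_succ, List.flatten_cons, List.map_append, List.prod_append, ih, pow_succ']
    congr 1
    rw [List.map_append, List.prod_append, ← Fin.prod_univ_def, ← Finset.prod_mul_distrib]
    exact Finset.prod_congr rfl fun j _ => norm_one_add_I_mul_sq _

/-- The Fourier transforms of a family dominated by `B·Ω` decay rapidly, uniformly in the
parameter. -/
lemma Wt.decay (h : Wt f (fun p z => B p * Om z)) (R : ℕ) :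
    ∃ C : ℝ, 0 ≤ C ∧ ∀ p ζ, ‖pF (f p) ζ‖ ≤ C * |B p| * Om ζ ^ R := by
  obtain ⟨C, hC⟩ := Wt.decay_list (List.replicate R (List.finRange m ++ List.finRange m)).flatten h
  refine ⟨|C|, abs_nonneg C, fun p ζ => ?_⟩
  have hp := list_prod_eq_Pj_pow ζ R
  have h1 := hC p ζ
  rw [hp] at h1
  have h2 : C * B p ≤ |C| * |B p| := by rw [← abs_mul]; exact le_abs_self _
  have h3 : 0 < Pj ζ ^ R := pow_pos (Pj_pos ζ) R
  rw [Om, inv_pow, ← div_eq_mul_inv, le_div_iff₀ h3]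
  linarith

end decay

/-! ### Coordinate derivatives on the half-space and the symbol-kernel class -/

/-- The space of the variables `((x', t), ξ')`. -/
abbrev ZZ (m : ℕ) : Type := (Eu m × ℝ) × Eu m

/-- The closed half-space `t ≥ 0` of `ZZ m`. -/
def HS (m : ℕ) : Set (ZZ m) := {z | 0 ≤ z.1.2}

/-- Coordinate directions of `ZZ m`: `none` is `t`, `some (inl j)` is `x'ⱼ` and
`some (inr j)` is `ξ'ⱼ`. -/
abbrev Dir (m : ℕ) : Type := Option (Fin m ⊕ Fin m)

/-- The coordinate vector of a direction. -/
def dvec {m : ℕ} : Dir m → ZZ m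
  | none => ((0, 1), 0)
  | some (Sum.inl j) => ((Pi.single j 1, 0), 0)
  | some (Sum.inr j) => ((0, 0), Pi.single j 1)

/-- The coordinate functional of a direction. -/
def dproj {m : ℕ} : Dir m → ZZ m →L[ℝ] ℝ
  | none => (ContinuousLinearMap.snd ℝ (Eu m) ℝ).comp (ContinuousLinearMap.fst ℝ (Eu m × ℝ) (Eu m))
  | some (Sum.inl j) => (ContinuousLinearMap.proj (R := ℝ) (φ := fun _ : Fin m => ℝ) j).comp
      ((ContinuousLinearMap.fst ℝ (Eu m) ℝ).comp
        (ContinuousLinearMap.fst ℝ (Eu m × ℝ) (Eu m)))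
  | some (Sum.inr j) => (ContinuousLinearMap.proj (R := ℝ) (φ := fun _ : Fin m => ℝ) j).comp
      (ContinuousLinearMap.snd ℝ (Eu m × ℝ) (Eu m))

/-- The change of the order of a symbol-kernel under differentiation in a direction. -/
def dord {m : ℕ} : Dir m → ℝ
  | none => 1
  | some (Sum.inl _) => 0
  | some (Sum.inr _) => -1

lemma sum_dproj_smul {m : ℕ} (v : ZZ m) : ∑ i, dproj i v • dvec i = v := by
  have h : ∀ y : Eu m, ∑ j, y j • (Pi.single j (1 : ℝ) : Eu m) = y := by
    intro y
    simpa using (pi_eq_sum_univ' y).symm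
  rw [Fintype.sum_option, Fintype.sum_sum_type]
  refine Prod.ext (Prod.ext ?_ ?_) ?_
  · simpa [dproj, dvec, Prod.fst_sum, Prod.snd_sum] using h v.1.1
  · simp [dproj, dvec, Prod.fst_sum, Prod.snd_sum]
  · simpa [dproj, dvec, Prod.fst_sum, Prod.snd_sum] using h v.2

/-- The linear map on `ZZ m` with prescribed values on the coordinate vectors, as a continuous
linear function of these values. -/
def PhiL (m : ℕ) : (Dir m → ℂ) →L[ℝ] (ZZ m →L[ℝ] ℂ) :=
  LinearMap.toContinuousLinearMap
    { toFun := fun c => ∑ i, (dproj i).smulRight (c i)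
      map_add' := by
        intro c d
        refine ContinuousLinearMap.ext fun v => ?_
        simp only [_root_.sum_apply, ContinuousLinearMap.smulRight_apply, Pi.add_apply, smul_add,
          Finset.sum_add_distrib, _root_.add_apply]
      map_smul' := by
        intro r c
        refine ContinuousLinearMap.ext fun v => ?_
        simp only [_root_.sum_apply, ContinuousLinearMap.smulRight_apply, Pi.smul_apply,
          Finset.smul_sum, _root_.smul_apply, RingHom.id_apply]
        exact Finset.sum_congr rfl fun i _ => smul_comm _ _ _ }

lemma PhiL_apply {m : ℕ} (c : Dir m → ℂ) (v : ZZ m) : PhiL m c v = ∑ i, dproj i v • c i := by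
  simp [PhiL, _root_.sum_apply]

lemma PhiL_of_clm {m : ℕ} (L : ZZ m →L[ℝ] ℂ) : PhiL m (fun i => L (dvec i)) = L := by
  refine ContinuousLinearMap.ext fun v => ?_
  rw [PhiL_apply]
  conv_rhs => rw [← sum_dproj_smul v]
  simp [map_sum]

lemma dproj_dvec {m : ℕ} (i k : Dir m) : dproj i (dvec k) = if i = k then 1 else 0 := by
  rcases i with _ | i | i <;> rcases k with _ | k | k <;>
    simp [dproj, dvec, Pi.single_apply]

lemma PhiL_dvec {m : ℕ} (c : Dir m → ℂ) (i : Dir m) : PhiL m c (dvec i) = c i := by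
  rw [PhiL_apply]
  simp only [dproj_dvec, ite_smul, one_smul, zero_smul, Finset.sum_ite_eq', Finset.mem_univ,
    if_true]

lemma HS_eq (m : ℕ) : HS m = ((Set.univ : Set (Eu m)) ×ˢ Set.Ici (0 : ℝ)) ×ˢ (Set.univ : Set (Eu m)) := by
  ext z; simp [HS]

lemma HS_uniqueDiffOn (m : ℕ) : UniqueDiffOn ℝ (HS m) := by
  rw [HS_eq]
  exact (uniqueDiffOn_univ.prod (uniqueDiffOn_Ici 0)).prod uniqueDiffOn_univ

/-- The open half-space `t > 0` of `ZZ m`. -/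
def HSo (m : ℕ) : Set (ZZ m) := {z | 0 < z.1.2}

lemma HSo_isOpen (m : ℕ) : IsOpen (HSo m) :=
  isOpen_lt continuous_const (continuous_snd.comp continuous_fst)

lemma HSo_subset (m : ℕ) : HSo m ⊆ HS m :=
  fun z (hz : 0 < z.1.2) => (le_of_lt hz : 0 ≤ z.1.2)

lemma HSo_convex (m : ℕ) : Convex ℝ (HSo m) := by
  intro a ha b hb s t hs ht hst
  simp only [HSo, Set.mem_ofPred_eq] at *
  simp only [Prod.fst_add, Prod.snd_add, Prod.smul_fst, Prod.smul_snd, smul_eq_mul]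
  rcases hs.eq_or_lt with rfl | hs
  · have : t = 1 := by linarith
    subst this; simpa using hb
  · have := mul_pos hs ha
    have := mul_nonneg ht hb.le
    linarith

lemma closure_HSo (m : ℕ) : closure (HSo m) = HS m := by
  have h1 : HSo m = ((Set.univ : Set (Eu m)) ×ˢ Set.Ioi (0 : ℝ)) ×ˢ (Set.univ : Set (Eu m)) := by
    ext z; simp [HSo]
  rw [h1, closure_prod_eq, closure_prod_eq, closure_Ioi, closure_univ, HS_eq]

lemma HS_subset_closure_interior (m : ℕ) : HS m ⊆ closure (interior (HS m)) := by
  rw [← closure_HSo]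
  conv_lhs => rw [← (HSo_isOpen m).interior_eq]
  exact closure_mono (interior_mono subset_closure)

/-- The derivative of `f` in a coordinate direction, within the closed half-space. -/
def Dd {m : ℕ} (i : Dir m) (f : ZZ m → ℂ) (z : ZZ m) : ℂ := fderivWithin ℝ f (HS m) z (dvec i)

/-- Iterated coordinate derivatives; the head of the word acts first. -/
def Dw {m : ℕ} : List (Dir m) → (ZZ m → ℂ) → ZZ m → ℂ
  | [], f => f
  | i :: w, f => Dw w (Dd i f)

/-- Smoothness up to the boundary. -/
abbrev Sm {m : ℕ} (f : ZZ m → ℂ) : Prop := ContDiffOn ℝ (⊤ : ℕ∞) f (HS m)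

section basic
variable {m : ℕ} {f g : ZZ m → ℂ}

lemma Dd_sm (hf : Sm f) (i : Dir m) : Sm (Dd i f) :=
  (hf.fderivWithin (m := (⊤ : ℕ∞)) (HS_uniqueDiffOn m) (by simp)).clm_apply contDiffOn_const

lemma sm_diff (hf : Sm f) : DifferentiableOn ℝ f (HS m) := hf.differentiableOn (by simp)

lemma Dd_congr (h : Set.EqOn f g (HS m)) (i : Dir m) : Set.EqOn (Dd i f) (Dd i g) (HS m) := by
  intro z hz
  unfold Dd
  rw [fderivWithin_congr h (h hz)]

lemma Dw_congr (w : List (Dir m)) : ∀ {f g : ZZ m → ℂ}, Set.EqOn f g (HS m) →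
    Set.EqOn (Dw w f) (Dw w g) (HS m) := by
  induction w with
  | nil => intro f g h; exact h
  | cons i w ih => intro f g h; exact ih (Dd_congr h i)

lemma Dw_sm (w : List (Dir m)) : ∀ {f : ZZ m → ℂ}, Sm f → Sm (Dw w f) := by
  induction w with
  | nil => intro f h; exact h
  | cons i w ih => intro f h; exact ih (Dd_sm h i)

lemma Dw_append (v w : List (Dir m)) : ∀ (f : ZZ m → ℂ), Dw (v ++ w) f = Dw w (Dw v f) := by
  induction v with
  | nil => intro f; rfl
  | cons i v ih => intro f; exact ih _

lemma Dd_hasFDerivWithinAt (hf : Sm f) {z : ZZ m} (hz : z ∈ HS m) :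
    HasFDerivWithinAt f (PhiL m fun i => Dd i f z) (HS m) z := by
  have := (sm_diff hf z hz).hasFDerivWithinAt
  convert this using 1
  exact PhiL_of_clm _

lemma Dd_of_hasFDerivWithinAt {c : Dir m → ℂ} {z : ZZ m} (hz : z ∈ HS m)
    (h : HasFDerivWithinAt f (PhiL m c) (HS m) z) (i : Dir m) : Dd i f z = c i := by
  unfold Dd
  rw [h.fderivWithin (HS_uniqueDiffOn m z hz), PhiL_dvec]

/-- Coordinate derivatives commute. -/
lemma Dd_comm (hf : Sm f) (i k : Dir m) : Set.EqOn (Dd i (Dd k f)) (Dd k (Dd i f)) (HS m) := by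
  intro z hz
  have hs : IsSymmSndFDerivWithinAt ℝ f (HS m) z :=
    (hf z hz).isSymmSndFDerivWithinAt (by
      simpa using WithTop.coe_le_coe.mpr (le_top : (2 : ℕ∞) ≤ ⊤)) (HS_uniqueDiffOn m)
      (HS_subset_closure_interior m hz) hz
  have hd : DifferentiableWithinAt ℝ (fderivWithin ℝ f (HS m)) (HS m) z :=
    (hf.fderivWithin (m := (⊤ : ℕ∞)) (HS_uniqueDiffOn m) (by simp)).differentiableOn (by simp) z hz
  have key : ∀ i k : Dir m, Dd i (Dd k f) z =
      fderivWithin ℝ (fderivWithin ℝ f (HS m)) (HS m) z (dvec i) (dvec k) := by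
    intro i k
    have : HasFDerivWithinAt (Dd k f) _ (HS m) z :=
      hd.hasFDerivWithinAt.clm_apply (hasFDerivWithinAt_const (dvec k) z (HS m))
    unfold Dd at this ⊢
    rw [this.fderivWithin (HS_uniqueDiffOn m z hz)]
    simp
  rw [key, key, hs.eq]

/-- The order of the directions in a word is immaterial, since coordinate derivatives commute. -/
lemma Dw_perm {v w : List (Dir m)} (h : v.Perm w) : ∀ {f : ZZ m → ℂ}, Sm f →
    Set.EqOn (Dw v f) (Dw w f) (HS m) := by
  induction h with
  | nil => intro f _ z _; rfl
  | cons i _ ih => intro f hf; exact ih (Dd_sm hf i)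
  | swap i k l => intro f hf; exact Dw_congr l (Dd_comm hf i k)
  | trans _ _ ih1 ih2 => intro f hf; exact (ih1 hf).trans (ih2 hf)

/-- The restriction of a function that is smooth up to the boundary to an affine subspace of the
half-space is smooth, with the expected derivative. -/
lemma slice_hasFDerivAt (hf : Sm f) {E : Type*} [NormedAddCommGroup E] [NormedSpace ℝ E]
    (z₀ : ZZ m) (L : E →L[ℝ] ZZ m) (hL : ∀ x, z₀ + L x ∈ HS m) (x : E) :
    HasFDerivAt (fun x => f (z₀ + L x)) ((PhiL m fun i => Dd i f (z₀ + L x)).comp L) x := by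
  have h1 := Dd_hasFDerivWithinAt hf (hL x)
  have h2 : HasFDerivWithinAt (fun x => z₀ + L x) L Set.univ x :=
    (L.hasFDerivAt.const_add z₀).hasFDerivWithinAt
  have := h1.comp x h2 (fun y _ => hL y)
  exact hasFDerivWithinAt_univ.mp this

lemma slice_contDiff (hf : Sm f) {E : Type*} [NormedAddCommGroup E] [NormedSpace ℝ E]
    (z₀ : ZZ m) (L : E →L[ℝ] ZZ m) (hL : ∀ x, z₀ + L x ∈ HS m) :
    ContDiff ℝ (⊤ : ℕ∞) (fun x => f (z₀ + L x)) :=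
  hf.comp_contDiff (contDiff_const.add L.contDiff) hL

end basic

/-- Scalar form of the symbol-kernel class: every coordinate derivative, multiplied by any power
of `t`, obeys the estimate of the order dictated by `dord`. -/
structure InC {m : ℕ} (μ : ℝ) (f : ZZ m → ℂ) : Prop where
  smooth : Sm f
  bdw : ∀ (w : List (Dir m)) (l : ℕ), ∃ C : ℝ, ∀ z ∈ HS m,
    z.1.2 ^ l * ‖Dw w f z‖ ≤ C * jap z.2 ^ (μ + (w.map dord).sum - l)

namespace InC
variable {m : ℕ} {μ : ℝ} {f g : ZZ m → ℂ}

lemma bd (h : InC μ f) (l : ℕ) : ∃ C : ℝ, 0 ≤ C ∧ ∀ z ∈ HS m,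
    z.1.2 ^ l * ‖f z‖ ≤ C * jap z.2 ^ (μ - l) := by
  obtain ⟨C, hC⟩ := h.bdw [] l
  refine ⟨|C|, abs_nonneg C, fun z hz => ?_⟩
  have := hC z hz
  simp only [Dw, List.map_nil, List.sum_nil, add_zero] at this
  exact this.trans (mul_le_mul_of_nonneg_right (le_abs_self C)
    (Real.rpow_pos_of_pos (jap_pos _) _).le)

lemma Dd (h : InC μ f) (i : Dir m) : InC (μ + dord i) (_root_.Dd i f) := by
  refine ⟨Dd_sm h.smooth i, fun w l => ?_⟩
  obtain ⟨C, hC⟩ := h.bdw (i :: w) l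
  refine ⟨C, fun z hz => ?_⟩
  have := hC z hz
  rw [List.map_cons, List.sum_cons, ← add_assoc] at this
  exact this

/-- Coinductive introduction rule for the symbol-kernel class. -/
lemma of_class (K : ℝ → (ZZ m → ℂ) → Prop) (hs : ∀ μ f, K μ f → Sm f)
    (hb : ∀ μ f, K μ f → ∀ l : ℕ, ∃ C : ℝ, ∀ z ∈ HS m,
      z.1.2 ^ l * ‖f z‖ ≤ C * jap z.2 ^ (μ - l))
    (hd : ∀ μ f, K μ f → ∀ i, K (μ + dord i) (_root_.Dd i f)) {μ : ℝ} {f : ZZ m → ℂ}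
    (hf : K μ f) : InC μ f := by
  refine ⟨hs μ f hf, fun w => ?_⟩
  induction w generalizing μ f with
  | nil => simpa [Dw] using hb μ f hf
  | cons i w ih =>
    intro l
    obtain ⟨C, hC⟩ := ih (hd μ f hf i) l
    refine ⟨C, fun z hz => ?_⟩
    rw [List.map_cons, List.sum_cons, ← add_assoc]
    exact hC z hz

lemma mono (h : InC μ f) {μ' : ℝ} (hμ : μ ≤ μ') : InC μ' f := by
  refine ⟨h.smooth, fun w l => ?_⟩
  obtain ⟨C, hC⟩ := h.bdw w l
  refine ⟨|C|, fun z hz => (hC z hz).trans ?_⟩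
  refine (mul_le_mul_of_nonneg_right (le_abs_self C)
    (Real.rpow_pos_of_pos (jap_pos _) _).le).trans (mul_le_mul_of_nonneg_left ?_ (abs_nonneg C))
  exact Real.rpow_le_rpow_of_exponent_le (jap_one_le _) (by linarith)

lemma add (hf : InC μ f) (hg : InC μ g) : InC μ (fun z => f z + g z) := by
  refine of_class (fun μ h => ∃ f g, InC μ f ∧ InC μ g ∧
    Set.EqOn h (fun z => f z + g z) (HS m)) ?_ ?_ ?_ ⟨f, g, hf, hg, fun _ _ => rfl⟩
  · rintro μ h ⟨f, g, hf, hg, he⟩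
    exact (hf.smooth.add hg.smooth).congr he
  · rintro μ h ⟨f, g, hf, hg, he⟩ l
    obtain ⟨C, _, hC⟩ := hf.bd l
    obtain ⟨D, _, hD⟩ := hg.bd l
    refine ⟨C + D, fun z hz => ?_⟩
    rw [he hz, add_mul]
    have h0 : 0 ≤ z.1.2 ^ l := pow_nonneg hz l
    have h1 := mul_le_mul_of_nonneg_left (norm_add_le (f z) (g z)) h0
    have := hC z hz
    have := hD z hz
    linarith
  · rintro μ h ⟨f, g, hf, hg, he⟩ i
    refine ⟨_, _, hf.Dd i, hg.Dd i, (Dd_congr he i).trans fun z hz => ?_⟩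
    simp only [_root_.Dd]
    rw [fderivWithin_fun_add (HS_uniqueDiffOn m z hz) (sm_diff hf.smooth z hz)
      (sm_diff hg.smooth z hz)]
    rfl

lemma conj (hf : InC μ f) : InC μ (fun z => (starRingEnd ℂ) (f z)) := by
  refine of_class (fun μ h => ∃ f, InC μ f ∧
    Set.EqOn h (fun z => (starRingEnd ℂ) (f z)) (HS m)) ?_ ?_ ?_ ⟨f, hf, fun _ _ => rfl⟩
  · rintro μ h ⟨f, hf, he⟩
    exact ((Complex.conjCLE.contDiff).comp_contDiffOn hf.smooth).congr he
  · rintro μ h ⟨f, hf, he⟩ l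
    obtain ⟨C, _, hC⟩ := hf.bd l
    refine ⟨C, fun z hz => ?_⟩
    rw [he hz]
    simpa using hC z hz
  · rintro μ h ⟨f, hf, he⟩ i
    refine ⟨_, hf.Dd i, (Dd_congr he i).trans fun z hz => ?_⟩
    simp only [_root_.Dd]
    have h1 : HasFDerivWithinAt (fun z => (starRingEnd ℂ) (f z)) _ (HS m) z :=
      (Complex.conjCLE.toContinuousLinearMap.hasFDerivAt (x := f z)).comp_hasFDerivWithinAt z
        (sm_diff hf.smooth z hz).hasFDerivWithinAt
    rw [h1.fderivWithin (HS_uniqueDiffOn m z hz)]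
    simp

end InC

/-! ### Dominated families: slices of symbol-kernels, rational weights, Schwartz functions -/

/-- The inclusion of the `x'`-variable in `ZZ m`. -/
def embX (m : ℕ) : Eu m →L[ℝ] ZZ m :=
  (ContinuousLinearMap.inl ℝ (Eu m × ℝ) (Eu m)).comp (ContinuousLinearMap.inl ℝ (Eu m) ℝ)

lemma embX_apply {m : ℕ} (z : Eu m) : embX m z = ((z, 0), 0) := rfl

/-- The inclusion of the `ξ'`-variable in `ZZ m`. -/
def embXi (m : ℕ) : Eu m →L[ℝ] ZZ m := ContinuousLinearMap.inr ℝ (Eu m × ℝ) (Eu m)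

lemma embXi_apply {m : ℕ} (z : Eu m) : embXi m z = ((0, 0), z) := rfl

/-- Translation by `z` in `x'` and by `ζ` in `ξ'`. -/
def tr {m : ℕ} (z ζ : Eu m) (p : ZZ m) : ZZ m := ((p.1.1 + z, p.1.2), p.2 + ζ)

lemma tr_mem {m : ℕ} {p : ZZ m} (hp : p ∈ HS m) (z ζ : Eu m) : tr z ζ p ∈ HS m := hp

lemma add_embX {m : ℕ} (p : ZZ m) (z : Eu m) : p + embX m z = tr z 0 p := by
  rw [embX_apply]
  simp [tr, Prod.ext_iff]

lemma add_embXi {m : ℕ} (p : ZZ m) (z : Eu m) : p + embXi m z = tr 0 z p := by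
  rw [embXi_apply]
  simp [tr, Prod.ext_iff]

section slices
variable {m : ℕ} {b : ZZ m → ℂ} {μ : ℝ}

lemma sliceX_pd (hb : Sm b) {p : ZZ m} (hp : p ∈ HS m) (j : Fin m) (z : Eu m) :
    pd j (fun z => b (tr z 0 p)) z = Dd (some (Sum.inl j)) b (tr z 0 p) := by
  have h := slice_hasFDerivAt hb p (embX m) (fun x => by rw [add_embX]; exact tr_mem hp x 0) z
  simp only [add_embX] at h
  unfold pd
  rw [h.fderiv, ContinuousLinearMap.comp_apply]
  exact PhiL_dvec _ (some (Sum.inl j))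

lemma sliceXi_pd (hb : Sm b) {p : ZZ m} (hp : p ∈ HS m) (j : Fin m) (z : Eu m) :
    pd j (fun z => b (tr 0 z p)) z = Dd (some (Sum.inr j)) b (tr 0 z p) := by
  have h := slice_hasFDerivAt hb p (embXi m) (fun x => by rw [add_embXi]; exact tr_mem hp 0 x) z
  simp only [add_embXi] at h
  unfold pd
  rw [h.fderiv, ContinuousLinearMap.comp_apply]
  exact PhiL_dvec _ (some (Sum.inr j))

lemma sliceX_smooth (hb : Sm b) {p : ZZ m} (hp : p ∈ HS m) :
    ContDiff ℝ (⊤ : ℕ∞) (fun z => b (tr z 0 p)) := by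
  have := slice_contDiff hb p (embX m) (fun x => by rw [add_embX]; exact tr_mem hp x 0)
  simpa only [add_embX] using this

lemma sliceXi_smooth (hb : Sm b) {p : ZZ m} (hp : p ∈ HS m) :
    ContDiff ℝ (⊤ : ℕ∞) (fun z => b (tr 0 z p)) := by
  have := slice_contDiff hb p (embXi m) (fun x => by rw [add_embXi]; exact tr_mem hp 0 x)
  simpa only [add_embXi] using this

/-- The `x'`-slices of a symbol-kernel form a family dominated by `⟨ξ'⟩^(μ - l)`, even after
multiplication by `t^l`. -/
lemma InC.wt (hb : InC μ b) (l : ℕ) :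
    Wt (fun (p : HS m) z => (p.1.1.2 : ℂ) ^ l * b (tr z 0 p.1))
      (fun p _ => jap p.1.2 ^ (μ - l)) := by
  refine Wt.of_class (fun f => ∃ b, InC μ b ∧
    f = fun (p : HS m) z => (p.1.1.2 : ℂ) ^ l * b (tr z 0 p.1)) ?_ ?_ ?_ ⟨b, hb, rfl⟩
  · rintro _ ⟨b, hb, rfl⟩ p
    exact contDiff_const.mul (sliceX_smooth hb.smooth p.2)
  · rintro _ ⟨b, hb, rfl⟩
    obtain ⟨C, _, hC⟩ := hb.bd l
    refine ⟨C, fun p z => ?_⟩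
    have := hC _ (tr_mem p.2 z 0)
    rw [norm_mul, norm_pow, Complex.norm_real, Real.norm_of_nonneg (show 0 ≤ p.1.1.2 from p.2)]
    simpa [tr] using this
  · rintro _ ⟨b, hb, rfl⟩ j
    refine ⟨_, by simpa [dord] using hb.Dd (some (Sum.inl j)), ?_⟩
    funext p z
    rw [← sliceX_pd hb.smooth p.2]
    unfold pd
    rw [fderiv_const_mul ((sliceX_smooth hb.smooth p.2).differentiable (by simp) z)]
    rfl

end slices

/-- The rational function `(1 + i zⱼ)⁻¹`. -/
def rr {m : ℕ} (j : Fin m) (z : Eu m) : ℂ := (1 + Complex.I * (z j : ℂ))⁻¹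

/-- The product of the functions `(1 + i zⱼ)⁻¹` over the list `L`. -/
def wl {m : ℕ} (L : List (Fin m)) (z : Eu m) : ℂ := (L.map fun j => rr j z).prod

section weights
variable {m : ℕ}

lemma one_add_I_ne (x : ℝ) : (1 + Complex.I * (x : ℂ)) ≠ 0 := by
  intro h
  have := congrArg Complex.re h
  simp at this

lemma one_add_mul_rr (j : Fin m) (z : Eu m) : (1 + Complex.I * (z j : ℂ)) * rr j z = 1 :=
  mul_inv_cancel₀ (one_add_I_ne _)

lemma norm_rr_mul_self (j : Fin m) (z : Eu m) : ‖rr j z‖ * ‖rr j z‖ = (1 + z j ^ 2)⁻¹ := by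
  rw [rr, norm_inv, ← mul_inv, norm_one_add_I_mul_sq]

lemma norm_rr_le_one (j : Fin m) (z : Eu m) : ‖rr j z‖ ≤ 1 := by
  have h := norm_rr_mul_self j z
  have : (1 + z j ^ 2)⁻¹ ≤ 1 := inv_le_one_of_one_le₀ (by nlinarith [sq_nonneg (z j)])
  nlinarith [norm_nonneg (rr j z)]

lemma rr_hasFDerivAt (j : Fin m) (z : Eu m) :
    HasFDerivAt (rr j) ((-Complex.I * rr j z ^ 2) •
      (Complex.ofRealCLM.comp (ContinuousLinearMap.proj (R := ℝ) (φ := fun _ : Fin m => ℝ) j))) z := by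
  have h0 : HasFDerivAt (fun z : Eu m => (z j : ℂ))
      (Complex.ofRealCLM.comp (ContinuousLinearMap.proj (R := ℝ) (φ := fun _ : Fin m => ℝ) j)) z :=
    (Complex.ofRealCLM.comp
      (ContinuousLinearMap.proj (R := ℝ) (φ := fun _ : Fin m => ℝ) j)).hasFDerivAt
  have h1 := (h0.const_mul Complex.I).const_add 1
  have h2 : HasDerivAt (fun w : ℂ => w⁻¹) (-((1 + Complex.I * (z j : ℂ)) ^ 2)⁻¹)
    (1 + Complex.I * (z j : ℂ)) := hasDerivAt_inv (one_add_I_ne _)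
  have h3 := h2.comp_hasFDerivAt z h1
  refine HasFDerivAt.congr_fderiv h3 ?_
  refine ContinuousLinearMap.ext fun v => ?_
  simp [rr]
  ring

lemma rr_smooth (j : Fin m) : ContDiff ℝ (⊤ : ℕ∞) (rr j : Eu m → ℂ) := by
  unfold rr
  refine ContDiff.inv (contDiff_const.add (contDiff_const.mul ?_)) fun z => one_add_I_ne _
  exact (Complex.ofRealCLM.comp
    (ContinuousLinearMap.proj (R := ℝ) (φ := fun _ : Fin m => ℝ) j)).contDiff

/-- Differentiating `(1 + i zⱼ)⁻¹` only produces further factors of the same kind. -/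
lemma wt_rr (j : Fin m) : Wt (fun (_ : Unit) z => rr j z) (fun _ z => ‖rr j z‖) := by
  refine Wt.of_class (fun f => ∃ (c : ℂ) (n : ℕ), f = fun (_ : Unit) z => c * rr j z ^ (n + 1))
    ?_ ?_ ?_ ⟨1, 0, by simp⟩
  · rintro _ ⟨c, n, rfl⟩ _
    exact contDiff_const.mul ((rr_smooth j).pow _)
  · rintro _ ⟨c, n, rfl⟩
    refine ⟨‖c‖, fun _ z => ?_⟩
    rw [norm_mul, norm_pow]
    refine mul_le_mul_of_nonneg_left ?_ (norm_nonneg _)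
    exact pow_le_of_le_one (norm_nonneg _) (norm_rr_le_one j z) (Nat.succ_ne_zero n)
  · rintro _ ⟨c, n, rfl⟩ k
    refine ⟨if j = k then c * (n + 1) * (-Complex.I) else 0, n + 1, ?_⟩
    funext _ z
    unfold pd
    have h := ((rr_hasFDerivAt j z).pow (n + 1)).const_mul c
    rw [h.fderiv]
    by_cases hjk : j = k
    · subst hjk
      simp
      ring
    · simp [hjk]

lemma wt_const (c : ℂ) : Wt (fun (_ : Unit) (_ : Eu m) => c) (fun _ _ => ‖c‖) := by
  refine Wt.of_class (fun f => (f = fun (_ : Unit) (_ : Eu m) => c) ∨ f = fun _ _ => 0)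
    ?_ ?_ ?_ (Or.inl rfl)
  · rintro _ (rfl | rfl) _ <;> exact contDiff_const
  · rintro _ (rfl | rfl)
    · exact ⟨1, fun _ _ => by simp⟩
    · exact ⟨1, fun _ _ => by simp⟩
  · rintro _ (rfl | rfl) j <;> exact Or.inr (by funext _ z; simp [pd])

lemma wt_wl (L : List (Fin m)) :
    Wt (fun (_ : Unit) z => wl L z) (fun _ z => (L.map fun j => ‖rr j z‖).prod) := by
  induction L with
  | nil => simpa [wl] using wt_const (m := m) 1
  | cons j L ih => simpa [wl] using (wt_rr j).mul ih

lemma prod_norm_rr (z : Eu m) :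
    ((List.finRange m ++ List.finRange m).map fun j => ‖rr j z‖).prod = Om z := by
  rw [List.map_append, List.prod_append, ← Fin.prod_univ_def, ← Finset.prod_mul_distrib, Om, Pj,
    ← Finset.prod_inv_distrib]
  exact Finset.prod_congr rfl fun j _ => norm_rr_mul_self j z

/-- The normalised weight `(2π)^(-m) ∏ⱼ (1 + i zⱼ)⁻²`. -/
def wgt (m : ℕ) (z : Eu m) : ℂ :=
  (((2 * Real.pi) ^ m : ℝ) : ℂ)⁻¹ * wl (List.finRange m ++ List.finRange m) z

lemma wt_wgt (m : ℕ) : Wt (fun (_ : Unit) z => wgt m z) (fun _ z => Om z) := by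
  have h := (wt_const (m := m) (((2 * Real.pi) ^ m : ℝ) : ℂ)⁻¹).mul
    (wt_wl (List.finRange m ++ List.finRange m))
  refine h.mono (fun _ z => ?_) ‖(((2 * Real.pi) ^ m : ℝ) : ℂ)⁻¹‖ fun _ z => ?_
  · rw [prod_norm_rr]; exact mul_nonneg (norm_nonneg _) (Om_nonneg z)
  · rw [prod_norm_rr]

lemma Pj_le_one_add_norm (z : Eu m) : Pj z ≤ (1 + ‖z‖) ^ (2 * m) := by
  have : ∀ j, 1 + z j ^ 2 ≤ (1 + ‖z‖) ^ 2 := by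
    intro j
    have h := norm_le_pi_norm z j
    rw [Real.norm_eq_abs] at h
    nlinarith [sq_abs (z j), abs_nonneg (z j), norm_nonneg z]
  calc Pj z ≤ ∏ _j : Fin m, (1 + ‖z‖) ^ 2 :=
        Finset.prod_le_prod (fun j _ => by positivity) fun j _ => this j
    _ = _ := by simp [pow_mul]

lemma schwartz_bound (φ : SchwartzMap (Eu m) ℂ) : ∃ C : ℝ, ∀ z, ‖φ z‖ ≤ C * Om z := by
  have h := SchwartzMap.one_add_le_sup_seminorm_apply (𝕜 := ℝ) (m := (2 * m, 0)) (k := 2 * m)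
    (n := 0) le_rfl le_rfl φ
  refine ⟨2 ^ (2 * m) * ((Finset.Iic (2 * m, 0)).sup
    fun q : ℕ × ℕ => SchwartzMap.seminorm ℝ q.1 q.2) φ, fun z => ?_⟩
  have h1 := h z
  rw [norm_iteratedFDeriv_zero] at h1
  have h2 := (mul_le_mul_of_nonneg_right (Pj_le_one_add_norm z) (norm_nonneg (φ z))).trans h1
  rw [Om, ← div_eq_mul_inv, le_div_iff₀ (Pj_pos z), mul_comm]
  exact h2

/-- The partial derivative of a Schwartz function, as a Schwartz function. -/
def spd {m : ℕ} (j : Fin m) (φ : SchwartzMap (Eu m) ℂ) : SchwartzMap (Eu m) ℂ :=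
  LineDeriv.lineDerivOp (Pi.single j (1 : ℝ) : Eu m) φ

lemma spd_apply (j : Fin m) (φ : SchwartzMap (Eu m) ℂ) (z : Eu m) :
    spd j φ z = fderiv ℝ φ z (Pi.single j 1) := by
  rw [spd, SchwartzMap.lineDerivOp_apply_eq_fderiv]

lemma wt_schwartz (φ : SchwartzMap (Eu m) ℂ) :
    Wt (fun (_ : Unit) z => φ z) (fun _ z => Om z) := by
  refine Wt.of_class (fun f => ∃ φ : SchwartzMap (Eu m) ℂ, f = fun (_ : Unit) z => φ z)
    ?_ ?_ ?_ ⟨φ, rfl⟩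
  · rintro _ ⟨φ, rfl⟩ _; exact φ.smooth ⊤
  · rintro _ ⟨φ, rfl⟩
    obtain ⟨C, hC⟩ := schwartz_bound φ
    exact ⟨C, fun _ z => hC z⟩
  · rintro _ ⟨φ, rfl⟩ j
    exact ⟨spd j φ, by funext _ z; rw [spd_apply]; rfl⟩

/-- The map `y ↦ (y, t)` is affine with linear part `y ↦ (y, 0)`. -/
def snocL (m : ℕ) : Eu m →L[ℝ] Eu (m + 1) :=
  LinearMap.toContinuousLinearMap
    { toFun := fun y => Fin.snoc (α := fun _ => ℝ) y 0
      map_add' := by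
        intro x y; funext i
        refine Fin.lastCases ?_ (fun i => ?_) i <;> simp
      map_smul' := by
        intro r y; funext i
        refine Fin.lastCases ?_ (fun i => ?_) i <;> simp }

lemma snoc_eq (y : Eu m) (t : ℝ) :
    (Fin.snoc (α := fun _ => ℝ) y t : Eu (m + 1)) = Pi.single (Fin.last m) t + snocL m y := by
  funext i
  refine Fin.lastCases ?_ (fun i => ?_) i
  · simp [snocL]
  · simp [snocL]

lemma Om_snoc (y : Eu m) (t : ℝ) :
    Om (Fin.snoc (α := fun _ => ℝ) y t : Eu (m + 1)) = (1 + t ^ 2)⁻¹ * Om y := by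
  simp [Om, Pj, Fin.prod_univ_castSucc, mul_comm]

/-- The slices `u(·, t)` of a Schwartz function are dominated, with an integrable factor in
`t`. -/
lemma wt_slice (u : SchwartzMap (Eu (m + 1)) ℂ) :
    Wt (fun (t : ℝ) (y : Eu m) => u (Fin.snoc (α := fun _ => ℝ) y t))
      (fun t z => (1 + t ^ 2)⁻¹ * Om z) := by
  refine Wt.of_class (fun f => ∃ φ : SchwartzMap (Eu (m + 1)) ℂ,
    f = fun (t : ℝ) (y : Eu m) => φ (Fin.snoc (α := fun _ => ℝ) y t)) ?_ ?_ ?_ ⟨u, rfl⟩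
  · rintro _ ⟨φ, rfl⟩ t
    simp only [snoc_eq]
    exact (φ.smooth ⊤).comp (contDiff_const.add (snocL m).contDiff)
  · rintro _ ⟨φ, rfl⟩
    obtain ⟨C, hC⟩ := schwartz_bound φ
    exact ⟨C, fun t z => by simpa [Om_snoc] using hC (Fin.snoc (α := fun _ => ℝ) z t)⟩
  · rintro _ ⟨φ, rfl⟩ j
    refine ⟨spd j.castSucc φ, ?_⟩
    funext t z
    rw [spd_apply]
    simp only [snoc_eq]
    unfold pd
    have h1 : HasFDerivAt (fun y : Eu m => Pi.single (Fin.last m) t + snocL m y) (snocL m) z :=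
      (snocL m).hasFDerivAt.const_add _
    have h2 := (φ.differentiableAt (x := Pi.single (Fin.last m) t + snocL m z)).hasFDerivAt.comp z h1
    have h3 : snocL m (Pi.single j 1) = Pi.single j.castSucc 1 := by
      funext i
      refine Fin.lastCases ?_ (fun i => ?_) i
      · simp [snocL]
      · simp [snocL, Pi.single_apply]
    rw [← h3]
    exact congrArg (fun L => L (Pi.single j 1)) h2.fderiv

end weights

/-! ### The oscillatory integral operator on symbol-kernels -/

/-- The Fourier transform in `z`, `∫ e^(-i z·ζ) w(z) b(x' + z, t, ξ' + ζ) dz`. -/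
def Ug {m : ℕ} (w : Eu m → ℂ) (b : ZZ m → ℂ) (p : ZZ m) (ζ : Eu m) : ℂ :=
  pF (fun z => w z * b (tr z ζ p)) ζ

/-- The iterated integral `∫∫ e^(-i z·ζ) w(z) b(x' + z, t, ξ' + ζ) dz dζ`. -/
def UU {m : ℕ} (w : Eu m → ℂ) (b : ZZ m → ℂ) (p : ZZ m) : ℂ := ∫ ζ, Ug w b p ζ

section parametric
variable {m : ℕ}

/-- Differentiation under the integral sign at interior points of the half-space, in
coordinates. -/
lemma hasFDerivAt_param {F : ZZ m → Eu m → ℂ} {G : Dir m → ZZ m → Eu m → ℂ} {p₀ : ZZ m}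
    (hp₀ : p₀ ∈ HSo m) (hFm : ∀ p ∈ HS m, Continuous (F p))
    (hGm : ∀ i, ∀ p ∈ HS m, Continuous (G i p))
    (hF : ∃ C : ℝ, ∀ᶠ p in 𝓝 p₀, p ∈ HS m → ∀ z, ‖F p z‖ ≤ C * Om z)
    (hG : ∀ i, ∃ C : ℝ, ∀ᶠ p in 𝓝 p₀, p ∈ HS m → ∀ z, ‖G i p z‖ ≤ C * Om z)
    (hd : ∀ z, ∀ p ∈ HSo m, HasFDerivAt (fun p => F p z) (PhiL m fun i => G i p z) p) :
    HasFDerivAt (fun p => ∫ z, F p z) (PhiL m fun i => ∫ z, G i p₀ z) p₀ := by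
  have hs : p₀ ∈ HS m := HSo_subset m hp₀
  have hn : ∀ᶠ p in 𝓝 p₀, p ∈ HSo m := (HSo_isOpen m).mem_nhds hp₀
  obtain ⟨C, hC⟩ := hF
  choose D hD using hG
  have hall : ∀ᶠ p in 𝓝 p₀, ∀ i, p ∈ HS m → ∀ z, ‖G i p z‖ ≤ D i * Om z :=
    Filter.eventually_all.mpr hD
  have hGi : ∀ i, Integrable (G i p₀) := fun i =>
    (Om_integrable.const_mul (D i)).mono' (hGm i p₀ hs).aestronglyMeasurable
      (Eventually.of_forall fun z => (hD i).self_of_nhds hs z)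
  have key := hasFDerivAt_integral_of_dominated_of_fderiv_le (μ := volume) (𝕜 := ℝ) (F := F)
    (F' := fun p z => PhiL m fun i => G i p z) (x₀ := p₀)
    (bound := fun z => ‖PhiL m‖ * ((∑ i, |D i|) * Om z))
    (s := {p | p ∈ HSo m ∧ ∀ i, p ∈ HS m → ∀ z, ‖G i p z‖ ≤ D i * Om z})
    (hn.and hall)
    (hn.mono fun p hp => (hFm p (HSo_subset m hp)).aestronglyMeasurable)
    ((Om_integrable.const_mul C).mono' (hFm p₀ hs).aestronglyMeasurable
      (Eventually.of_forall fun z => hC.self_of_nhds hs z))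
    ((PhiL m).continuous.comp (continuous_pi fun i => hGm i p₀ hs)).aestronglyMeasurable
    (Eventually.of_forall fun z p hp => by
      refine ((PhiL m).le_opNorm _).trans (mul_le_mul_of_nonneg_left ?_ (norm_nonneg _))
      refine (pi_norm_le_iff_of_nonneg (mul_nonneg (Finset.sum_nonneg fun i _ => abs_nonneg _)
        (Om_nonneg z))).mpr fun i => ?_
      refine (hp.2 i (HSo_subset m hp.1) z).trans (mul_le_mul_of_nonneg_right ?_ (Om_nonneg z))
      exact (le_abs_self _).trans
        (Finset.single_le_sum (f := fun i => |D i|) (fun i _ => abs_nonneg _) (Finset.mem_univ i)))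
    ((Om_integrable.const_mul _).const_mul _)
    (Eventually.of_forall fun z p hp => hd z p hp.1)
  refine key.congr_fderiv ?_
  have h1 : Integrable (fun z (i : Dir m) => G i p₀ z) := Integrable.of_eval hGi
  rw [(PhiL m).integral_comp_comm h1]
  congr 1
  funext i
  exact eval_integral hGi i

lemma jap_rpow_eventually (s : ℝ) (η₀ : Eu m) : ∀ᶠ η in 𝓝 η₀, jap η ^ s ≤ jap η₀ ^ s + 1 := by
  have : ContinuousAt (fun η : Eu m => jap η ^ s) η₀ :=
    jap_continuous.continuousAt.rpow_const (Or.inl (jap_pos η₀).ne')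
  exact (this.eventually_lt_const (lt_add_one _)).mono fun _ h => h.le

end parametric

section operator
variable {m : ℕ} {w : Eu m → ℂ} {b : ZZ m → ℂ} {μ : ℝ}

lemma Ug_eq (w : Eu m → ℂ) (b : ZZ m → ℂ) (p : ZZ m) (ζ : Eu m) :
    Ug w b p ζ = ∫ z, ek z ζ * (w z * b (tr z ζ p)) := rfl

lemma w_bd (hw : Wt (fun (_ : Unit) z => w z) fun _ z => Om z) :
    ∃ C : ℝ, 0 ≤ C ∧ ∀ z, ‖w z‖ ≤ C * Om z := by
  obtain ⟨C, hC⟩ := hw.bd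
  exact ⟨|C|, abs_nonneg C, fun z => (hC () z).trans
    (mul_le_mul_of_nonneg_right (le_abs_self C) (Om_nonneg z))⟩

/-- The rapid decay in `ζ` of the Fourier integrand beats the polynomial loss in Peetre's
inequality. -/
lemma Ug_bound (hw : Wt (fun (_ : Unit) z => w z) fun _ z => Om z) (hb : InC μ b) (l : ℕ) :
    ∃ C : ℝ, 0 ≤ C ∧ ∀ p ∈ HS m, ∀ ζ,
      p.1.2 ^ l * ‖Ug w b p ζ‖ ≤ C * jap p.2 ^ (μ - l) * Om ζ := by
  have h1 : Wt (fun (p : HS m) z => w z * ((p.1.1.2 : ℂ) ^ l * b (tr z 0 p.1)))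
      (fun p z => jap p.1.2 ^ (μ - l) * Om z) := by
    refine ((hw.comp fun _ : HS m => ()).mul (hb.wt l)).mono (fun p z => ?_) 1 fun p z => ?_
    · exact mul_nonneg (Om_nonneg z) (Real.rpow_pos_of_pos (jap_pos _) _).le
    · rw [one_mul, mul_comm]
  obtain ⟨n, hn⟩ := exists_nat_ge |μ - l|
  obtain ⟨C, hC0, hC⟩ := Wt.decay (B := fun p : HS m => jap p.1.2 ^ (μ - l)) h1 (n + 1)
  refine ⟨C * 2 ^ n, by positivity, fun p hp ζ => ?_⟩
  have h2 := hC ⟨tr 0 ζ p, tr_mem hp 0 ζ⟩ ζ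
  have h3 : pF (fun z => w z * (((tr 0 ζ p).1.2 : ℂ) ^ l * b (tr z 0 (tr 0 ζ p)))) ζ
      = (p.1.2 : ℂ) ^ l * Ug w b p ζ := by
    rw [Ug_eq, pF_eq, ← integral_const_mul]
    refine integral_congr_ae (Eventually.of_forall fun z => ?_)
    simp only [tr, add_zero]
    ring
  simp only [] at h2
  rw [h3, norm_mul, norm_pow, Complex.norm_real, Real.norm_of_nonneg (show 0 ≤ p.1.2 from hp),
    abs_of_pos (Real.rpow_pos_of_pos (jap_pos _) _)] at h2
  refine h2.trans ?_
  have h4 := peetre (μ - l) n hn p.2 ζ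
  have h5 : 0 ≤ Om ζ ^ (n + 1) := pow_nonneg (Om_nonneg ζ) _
  calc C * jap (p.2 + ζ) ^ (μ - l) * Om ζ ^ (n + 1)
      ≤ C * ((2 * Pj ζ) ^ n * jap p.2 ^ (μ - l)) * Om ζ ^ (n + 1) :=
        mul_le_mul_of_nonneg_right (mul_le_mul_of_nonneg_left h4 hC0) h5
    _ = C * 2 ^ n * jap p.2 ^ (μ - l) * ((Pj ζ * Om ζ) ^ n * Om ζ) := by
        rw [mul_pow, mul_pow]; ring
    _ = _ := by rw [Pj_mul_Om, one_pow, one_mul]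

lemma integrand_loc (hw : Wt (fun (_ : Unit) z => w z) fun _ z => Om z) (hb : InC μ b)
    (q₀ : ZZ m × Eu m) : ∃ C : ℝ, ∀ᶠ q in 𝓝 q₀, q.1 ∈ HS m → ∀ z,
      ‖ek z q.2 * (w z * b (tr z q.2 q.1))‖ ≤ C * Om z := by
  obtain ⟨A, hA0, hA⟩ := w_bd hw
  obtain ⟨B, hB0, hB⟩ := hb.bd 0
  refine ⟨A * (B * (jap (q₀.1.2 + q₀.2) ^ (μ - (0 : ℕ)) + 1)), ?_⟩
  have hc : Continuous (fun q : ZZ m × Eu m => q.1.2 + q.2) := by fun_prop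
  filter_upwards [hc.continuousAt.eventually (jap_rpow_eventually (μ - (0 : ℕ)) _)] with q hq hqs z
  have h1 := hB _ (tr_mem hqs z q.2)
  rw [pow_zero, one_mul] at h1
  rw [norm_mul, norm_ek, one_mul, norm_mul]
  calc ‖w z‖ * ‖b (tr z q.2 q.1)‖
      ≤ (A * Om z) * (B * (jap (q₀.1.2 + q₀.2) ^ (μ - (0 : ℕ)) + 1)) :=
        mul_le_mul (hA z) (h1.trans (mul_le_mul_of_nonneg_left hq hB0)) (norm_nonneg _)
          (mul_nonneg hA0 (Om_nonneg z))
    _ = _ := by ring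

lemma integrand_cont (hw : Wt (fun (_ : Unit) z => w z) fun _ z => Om z) (hb : InC μ b)
    {p : ZZ m} (hp : p ∈ HS m) (ζ ζ' : Eu m) :
    Continuous (fun z => ek z ζ * (w z * b (tr z ζ' p))) := by
  have h1 : Continuous (fun z => b (tr z ζ' p)) := by
    have := (sliceX_smooth hb.smooth (tr_mem hp 0 ζ')).continuous
    simpa [tr] using this
  have h2 : Continuous w := (hw.smooth ()).continuous
  have h3 : Continuous (fun z : Eu m => ek z ζ) := ek_cont continuous_id continuous_const
  exact h3.mul (h2.mul h1)

lemma Ug_continuousOn (hw : Wt (fun (_ : Unit) z => w z) fun _ z => Om z) (hb : InC μ b) :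
    ContinuousOn (fun q : ZZ m × Eu m => Ug w b q.1 q.2) (HS m ×ˢ Set.univ) := by
  intro q₀ hq₀
  obtain ⟨C, hC⟩ := integrand_loc hw hb q₀
  simp only [Ug_eq]
  refine continuousWithinAt_of_dominated (bound := fun z => C * Om z) ?_ ?_
    (Om_integrable.const_mul C) (Eventually.of_forall fun z => ?_)
  · filter_upwards [self_mem_nhdsWithin] with q hq
    exact (integrand_cont hw hb hq.1 _ _).aestronglyMeasurable
  · filter_upwards [self_mem_nhdsWithin, nhdsWithin_le_nhds hC] with q hq h
    exact Eventually.of_forall fun z => h hq.1 z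
  · have h1 : ContinuousWithinAt (fun q : ZZ m × Eu m => b (tr z q.2 q.1))
        (HS m ×ˢ Set.univ) q₀ := by
      have hc : Continuous (fun q : ZZ m × Eu m => tr z q.2 q.1) := by unfold tr; fun_prop
      have hcb : ContinuousOn b (HS m) := hb.smooth.continuousOn
      have hmaps : Set.MapsTo (fun q : ZZ m × Eu m => tr z q.2 q.1) (HS m ×ˢ Set.univ) (HS m) :=
        fun q hq => tr_mem (p := q.1) hq.1 z q.2
      exact (hcb.comp hc.continuousOn hmaps).continuousWithinAt hq₀
    have h2 : Continuous (fun q : ZZ m × Eu m => ek z q.2) := 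
      ek_cont (X := ZZ m × Eu m) (f := fun _ => z) (g := fun q => q.2) continuous_const continuous_snd
    exact h2.continuousWithinAt.mul (continuousWithinAt_const.mul h1)

lemma Ug_continuous (hw : Wt (fun (_ : Unit) z => w z) fun _ z => Om z) (hb : InC μ b)
    {p : ZZ m} (hp : p ∈ HS m) : Continuous (Ug w b p) := by
  have hc : Continuous (fun ζ : Eu m => (p, ζ)) := Continuous.prodMk_right p
  have hmem : ∀ ζ : Eu m, (p, ζ) ∈ HS m ×ˢ (Set.univ : Set (Eu m)) :=
    fun ζ => ⟨hp, Set.mem_univ _⟩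
  have h := (Ug_continuousOn hw hb).comp_continuous hc hmem
  exact h

lemma Ug_loc (hw : Wt (fun (_ : Unit) z => w z) fun _ z => Om z) (hb : InC μ b) (p₀ : ZZ m) :
    ∃ C : ℝ, ∀ᶠ p in 𝓝 p₀, p ∈ HS m → ∀ ζ, ‖Ug w b p ζ‖ ≤ C * Om ζ := by
  obtain ⟨C, hC0, hC⟩ := Ug_bound hw hb 0
  refine ⟨C * (jap p₀.2 ^ (μ - (0 : ℕ)) + 1), ?_⟩
  filter_upwards [continuous_snd.continuousAt.eventually
    (jap_rpow_eventually (μ - (0 : ℕ)) p₀.2)] with p hp hps ζ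
  have := hC p hps ζ
  rw [pow_zero, one_mul] at this
  exact this.trans (mul_le_mul_of_nonneg_right (mul_le_mul_of_nonneg_left hp hC0) (Om_nonneg ζ))

lemma UU_continuousOn (hw : Wt (fun (_ : Unit) z => w z) fun _ z => Om z) (hb : InC μ b) :
    ContinuousOn (UU w b) (HS m) := by
  intro p₀ hp₀
  obtain ⟨C, hC⟩ := Ug_loc hw hb p₀
  refine continuousWithinAt_of_dominated (bound := fun z => C * Om z) ?_ ?_
    (Om_integrable.const_mul C) (Eventually.of_forall fun ζ => ?_)
  · filter_upwards [self_mem_nhdsWithin] with p hp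
    exact (Ug_continuous hw hb hp).aestronglyMeasurable
  · filter_upwards [self_mem_nhdsWithin, nhdsWithin_le_nhds hC] with p hp h
    exact Eventually.of_forall fun z => h hp z
  · have hc : Continuous (fun p : ZZ m => (p, ζ)) := Continuous.prodMk_left ζ
    exact (Ug_continuousOn hw hb).comp hc.continuousOn (fun p hp => ⟨hp, Set.mem_univ _⟩) p₀ hp₀

/-- Differentiation under the `z`-integral, at interior points of the half-space. -/
lemma Ug_hasFDerivAt (hw : Wt (fun (_ : Unit) z => w z) fun _ z => Om z) (hb : InC μ b)
    {p₀ : ZZ m} (hp₀ : p₀ ∈ HSo m) (ζ : Eu m) :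
    HasFDerivAt (fun p => Ug w b p ζ) (PhiL m fun i => Ug w (Dd i b) p₀ ζ) p₀ := by
  simp only [Ug_eq]
  have loc : ∀ {μ : ℝ} {b : ZZ m → ℂ}, InC μ b → ∃ C : ℝ, ∀ᶠ p in 𝓝 p₀, p ∈ HS m → ∀ z,
      ‖ek z ζ * (w z * b (tr z ζ p))‖ ≤ C * Om z := by
    intro μ b hb
    obtain ⟨C, hC⟩ := integrand_loc hw hb (p₀, ζ)
    exact ⟨C, (Continuous.prodMk_left ζ).continuousAt.eventually hC⟩
  refine hasFDerivAt_param (F := fun p z => ek z ζ * (w z * b (tr z ζ p)))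
    (G := fun i p z => ek z ζ * (w z * Dd i b (tr z ζ p))) hp₀
    (fun p hp => integrand_cont hw hb hp ζ ζ) (fun i p hp => integrand_cont hw (hb.Dd i) hp ζ ζ)
    (loc hb) (fun i => loc (hb.Dd i)) fun z p hp => ?_
  have hm : tr z ζ p ∈ HSo m := hp
  have h1 : HasFDerivAt b (PhiL m fun i => Dd i b (tr z ζ p)) (tr z ζ p) :=
    (Dd_hasFDerivWithinAt hb.smooth (HSo_subset m hm)).hasFDerivAt
      (Filter.mem_of_superset ((HSo_isOpen m).mem_nhds hm) (HSo_subset m))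
  have h2 : HasFDerivAt (fun p : ZZ m => tr z ζ p) (ContinuousLinearMap.id ℝ (ZZ m)) p := by
    have : (fun p : ZZ m => tr z ζ p) = fun p => p + ((z, 0), ζ) := by
      funext p; simp [tr, Prod.ext_iff]
    rw [this]
    exact (hasFDerivAt_id p).add_const _
  have h3 := ((h1.comp p h2).const_mul (w z)).const_mul (ek z ζ)
  refine h3.congr_fderiv ?_
  rw [ContinuousLinearMap.comp_id]
  refine ContinuousLinearMap.ext fun v => ?_
  simp only [_root_.smul_apply, PhiL_apply, Finset.mul_sum, smul_eq_mul, Complex.real_smul]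
  exact Finset.sum_congr rfl fun i _ => by ring

lemma UU_hasFDerivAt (hw : Wt (fun (_ : Unit) z => w z) fun _ z => Om z) (hb : InC μ b)
    {p₀ : ZZ m} (hp₀ : p₀ ∈ HSo m) :
    HasFDerivAt (UU w b) (PhiL m fun i => UU w (Dd i b) p₀) p₀ :=
  hasFDerivAt_param (F := Ug w b) (G := fun i => Ug w (Dd i b)) hp₀
    (fun _ hp => Ug_continuous hw hb hp) (fun i _ hp => Ug_continuous hw (hb.Dd i) hp)
    (Ug_loc hw hb p₀) (fun i => Ug_loc hw (hb.Dd i) p₀)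
    fun ζ _ hp => Ug_hasFDerivAt hw hb hp ζ

/-- Differentiability extends to the boundary because the derivative does so continuously. -/
lemma UU_hasFDerivWithinAt (hw : Wt (fun (_ : Unit) z => w z) fun _ z => Om z) (hb : InC μ b)
    {p₀ : ZZ m} (hp₀ : p₀ ∈ HS m) :
    HasFDerivWithinAt (UU w b) (PhiL m fun i => UU w (Dd i b) p₀) (HS m) p₀ := by
  rw [← closure_HSo]
  refine hasFDerivWithinAt_closure_of_tendsto_fderiv
    (fun p hp => (UU_hasFDerivAt hw hb hp).differentiableAt.differentiableWithinAt)
    (HSo_convex m) (HSo_isOpen m) ?_ ?_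
  · rw [closure_HSo]
    exact fun p hp => (UU_continuousOn hw hb p hp).mono (HSo_subset m)
  · have h1 : Tendsto (fun p => PhiL m fun i => UU w (Dd i b) p) (𝓝[HSo m] p₀)
        (𝓝 (PhiL m fun i => UU w (Dd i b) p₀)) :=
      (((PhiL m).continuous.tendsto _).comp (tendsto_pi_nhds.mpr fun i =>
        (UU_continuousOn hw (hb.Dd i) p₀ hp₀).mono (HSo_subset m)))
    refine h1.congr' ?_
    filter_upwards [self_mem_nhdsWithin] with p hp
    exact (UU_hasFDerivAt hw hb hp).fderiv.symm

/-- Smoothness up to the boundary, by induction: the derivative is assembled from the functions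
`UU w (Dd i b)`, which are of the same form. -/
lemma UU_contDiffOn (hw : Wt (fun (_ : Unit) z => w z) fun _ z => Om z) (n : ℕ) :
    ∀ {μ : ℝ} {b : ZZ m → ℂ}, InC μ b → ContDiffOn ℝ n (UU w b) (HS m) := by
  induction n with
  | zero => intro μ b hb; exact contDiffOn_zero.mpr (UU_continuousOn hw hb)
  | succ n ih =>
    intro μ b hb
    rw [Nat.cast_succ, contDiffOn_succ_iff_fderivWithin (HS_uniqueDiffOn m)]
    refine ⟨fun p hp => (UU_hasFDerivWithinAt hw hb hp).differentiableWithinAt, by simp, ?_⟩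
    refine ContDiffOn.congr (f := fun p => PhiL m fun i => UU w (Dd i b) p) ?_ fun p hp =>
      (UU_hasFDerivWithinAt hw hb hp).fderivWithin (HS_uniqueDiffOn m p hp)
    exact (PhiL m).contDiff.comp_contDiffOn (contDiffOn_pi.mpr fun i => ih (hb.Dd i))

/-- The oscillatory integral operator preserves the symbol-kernel classes. -/
lemma InC.UU (hw : Wt (fun (_ : Unit) z => w z) fun _ z => Om z) (hb : InC μ b) :
    InC μ (UU w b) := by
  refine InC.of_class (fun μ f => ∃ b, InC μ b ∧ Set.EqOn f (_root_.UU w b) (HS m)) ?_ ?_ ?_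
    ⟨b, hb, fun _ _ => rfl⟩
  · rintro μ f ⟨b, hb, he⟩
    exact (contDiffOn_infty.mpr fun n => UU_contDiffOn hw n hb).congr he
  · rintro μ f ⟨b, hb, he⟩ l
    obtain ⟨C, hC0, hC⟩ := Ug_bound hw hb l
    refine ⟨C * ∫ ζ : Eu m, Om ζ, fun p hp => ?_⟩
    have hl : 0 ≤ p.1.2 ^ l := pow_nonneg hp l
    rw [he hp]
    calc p.1.2 ^ l * ‖_root_.UU w b p‖ ≤ p.1.2 ^ l * ∫ ζ, ‖Ug w b p ζ‖ :=
          mul_le_mul_of_nonneg_left (norm_integral_le_integral_norm _) hl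
      _ = ∫ ζ, p.1.2 ^ l * ‖Ug w b p ζ‖ := (integral_const_mul _ _).symm
      _ ≤ ∫ ζ, C * jap p.2 ^ (μ - l) * Om ζ :=
          integral_mono_of_nonneg (Eventually.of_forall fun ζ => mul_nonneg hl (norm_nonneg _))
            (Om_integrable.const_mul _) (Eventually.of_forall fun ζ => hC p hp ζ)
      _ = _ := by rw [integral_const_mul]; ring
  · rintro μ f ⟨b, hb, he⟩ i
    refine ⟨_, hb.Dd i, (Dd_congr he i).trans fun p hp => ?_⟩
    exact Dd_of_hasFDerivWithinAt hp (UU_hasFDerivWithinAt hw hb hp) i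

end operator

/-! ### Multi-index seminorms versus words of coordinate derivatives -/

/-- The word of directions in which `mDeriv α`, restricted to the coordinates in a list,
differentiates; its head acts first. -/
def mword {m : ℕ} (e : Fin m → Dir m) (α : Fin m → ℕ) : List (Fin m) → List (Dir m)
  | [] => []
  | i :: L => mword e α L ++ List.replicate (α i) (e i)

section bridge
variable {m : ℕ} {f : ZZ m → ℂ}

lemma iterate_cDeriv (e : Fin m → Dir m) (s : Eu m → ZZ m)
    (hs : ∀ (f : ZZ m → ℂ), Sm f → ∀ i, cDeriv i (fun x => f (s x)) = fun x => Dd (e i) f (s x))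
    (i : Fin m) (n : ℕ) : ∀ {f : ZZ m → ℂ}, Sm f →
      (cDeriv i)^[n] (fun x => f (s x)) = fun x => Dw (List.replicate n (e i)) f (s x) := by
  induction n with
  | zero => intro f _; rfl
  | succ n ih =>
    intro f hf
    rw [Function.iterate_succ_apply, hs f hf i, ih (Dd_sm hf (e i))]
    rfl

/-- A multi-index derivative along a family `s` of slices is a word of coordinate derivatives, as
soon as this holds for each single derivative. -/
lemma mDeriv_eq_Dw (e : Fin m → Dir m) (s : Eu m → ZZ m)
    (hs : ∀ (f : ZZ m → ℂ), Sm f → ∀ i, cDeriv i (fun x => f (s x)) = fun x => Dd (e i) f (s x))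
    (α : Fin m → ℕ) (hf : Sm f) :
    mDeriv α (fun x => f (s x)) = fun x => Dw (mword e α (List.finRange m)) f (s x) := by
  unfold mDeriv
  generalize List.finRange m = L
  induction L with
  | nil => rfl
  | cons i L ih =>
    rw [List.foldr_cons, ih, iterate_cDeriv e s hs i (α i) (Dw_sm _ hf), mword]
    simp only [Dw_append]

lemma cDeriv_eq_of_hasFDerivAt {g : Eu m → ℂ} {x : Eu m} {L : Eu m →L[ℝ] ℂ}
    (h : HasFDerivAt g L x) (i : Fin m) : cDeriv i g x = L (Pi.single i 1) := by
  have h1 : HasDerivAt (Function.update x i) (Pi.single i (1 : ℝ)) (x i) :=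
    hasDerivAt_update x i (x i)
  have h2 : HasFDerivAt g L (Function.update x i (x i)) := by rwa [Function.update_eq_self]
  exact (h2.comp_hasDerivAt (x i) h1).deriv

lemma cDeriv_xi {y : Eu m} {u : ℝ} (hu : 0 ≤ u) (f : ZZ m → ℂ) (hf : Sm f) (i : Fin m) :
    cDeriv i (fun η => f ((y, u), η)) = fun η => Dd (some (Sum.inr i)) f ((y, u), η) := by
  funext η
  have h := slice_hasFDerivAt hf ((y, u), 0) (embXi m)
    (fun x => by rw [add_embXi]; exact tr_mem (p := ((y, u), 0)) hu 0 x) η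
  simp only [add_embXi, tr, add_zero, zero_add] at h
  rw [cDeriv_eq_of_hasFDerivAt h, ContinuousLinearMap.comp_apply]
  exact PhiL_dvec _ (some (Sum.inr i))

lemma cDeriv_x {ξ : Eu m} {u : ℝ} (hu : 0 ≤ u) (f : ZZ m → ℂ) (hf : Sm f) (i : Fin m) :
    cDeriv i (fun y => f ((y, u), ξ)) = fun y => Dd (some (Sum.inl i)) f ((y, u), ξ) := by
  funext η
  have h := slice_hasFDerivAt hf ((0, u), ξ) (embX m)
    (fun x => by rw [add_embX]; exact tr_mem (p := ((0, u), ξ)) hu x 0) η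
  simp only [add_embX, tr, add_zero, zero_add] at h
  rw [cDeriv_eq_of_hasFDerivAt h, ContinuousLinearMap.comp_apply]
  exact PhiL_dvec _ (some (Sum.inl i))

lemma iteratedDerivWithin_t (y ξ : Eu m) (n : ℕ) : ∀ {f : ZZ m → ℂ}, Sm f →
    Set.EqOn (iteratedDerivWithin n (fun u => f ((y, u), ξ)) (Set.Ici 0))
      (fun t => Dw (List.replicate n none) f ((y, t), ξ)) (Set.Ici 0) := by
  induction n with
  | zero => intro f _ t _; simp [Dw]
  | succ n ih =>
    intro f hf t ht
    have hd : Set.EqOn (derivWithin (fun u => f ((y, u), ξ)) (Set.Ici 0))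
        (fun t => Dd none f ((y, t), ξ)) (Set.Ici 0) := by
      intro t ht
      have h1 := Dd_hasFDerivWithinAt hf (z := ((y, t), ξ)) ht
      have h2 : HasDerivWithinAt (fun u : ℝ => (((y, u), ξ) : ZZ m)) ((0, 1), 0) (Set.Ici 0) t :=
        (((hasDerivAt_const t y).prodMk (hasDerivAt_id t)).prodMk
          (hasDerivAt_const t ξ)).hasDerivWithinAt
      have h3 := (h1.comp_hasDerivWithinAt t h2 (fun u hu => hu)).derivWithin
        (uniqueDiffOn_Ici 0 t ht)
      exact h3.trans (PhiL_dvec _ none)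
    rw [iteratedDerivWithin_succ', iteratedDerivWithin_congr hd ht]
    exact ih (Dd_sm hf none) ht

/-- The canonical word of directions of a multi-index derivative. -/
def cword {m : ℕ} (α β : Fin m → ℕ) (n : ℕ) : List (Dir m) :=
  mword (fun i => some (Sum.inr i)) α (List.finRange m) ++
    (mword (fun i => some (Sum.inl i)) β (List.finRange m) ++ List.replicate n none)

lemma pkDeriv_eq {k : Eu m → ℝ → Eu m → ℂ} (hk : Sm fun z : ZZ m => k z.1.1 z.1.2 z.2)
    (α β : Fin m → ℕ) (l n : ℕ) (x : Eu m) {t : ℝ} (ht : 0 ≤ t) (ξ : Eu m) :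
    pkDeriv α β l n k x t ξ =
      (t : ℂ) ^ l * Dw (cword α β n) (fun z : ZZ m => k z.1.1 z.1.2 z.2) ((x, t), ξ) := by
  unfold pkDeriv
  set f : ZZ m → ℂ := fun z : ZZ m => k z.1.1 z.1.2 z.2 with hfdef
  set w1 := mword (fun i : Fin m => some (Sum.inr i)) α (List.finRange m) with hw1
  set w2 := mword (fun i : Fin m => some (Sum.inl i)) β (List.finRange m) with hw2
  have h1 : Set.EqOn (fun u => mDeriv β (fun y => mDeriv α (fun η => k y u η) ξ) x)
      (fun u => Dw w2 (Dw w1 f) ((x, u), ξ)) (Set.Ici 0) := by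
    intro u hu
    have hα : (fun y => mDeriv α (fun η => k y u η) ξ) = fun y => Dw w1 f ((y, u), ξ) := by
      funext y
      exact congrFun (mDeriv_eq_Dw (f := f) _ (fun η => ((y, u), η))
        (fun f hf i => cDeriv_xi hu f hf i) α hk) ξ
    simp only [hα]
    exact congrFun (mDeriv_eq_Dw (f := Dw w1 f) _ (fun y => ((y, u), ξ))
      (fun f hf i => cDeriv_x hu f hf i) β (Dw_sm w1 hk)) x
  rw [iteratedDerivWithin_congr h1 ht, iteratedDerivWithin_t x ξ n (Dw_sm w2 (Dw_sm w1 hk)) ht,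
    cword, Dw_append, Dw_append]

/-- Lets `List.count` be computed with the derived equality test on directions. -/
instance instLawfulBEqSumFin : LawfulBEq (Fin m ⊕ Fin m) where
  eq_of_beq := by
    rintro (a | a) (b | b) h
    · exact congrArg Sum.inl (eq_of_beq (show (a == b) = true from h))
    · exact absurd h Bool.false_ne_true
    · exact absurd h Bool.false_ne_true
    · exact congrArg Sum.inr (eq_of_beq (show (a == b) = true from h))
  rfl := by
    rintro (a | a)
    · exact (beq_self_eq_true a : (a == a) = true)
    · exact (beq_self_eq_true a : (a == a) = true)

lemma mword_count (e : Fin m → Dir m) (α : Fin m → ℕ) (a : Dir m) (L : List (Fin m)) :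
    (mword e α L).count a = (L.map fun i => if e i = a then α i else 0).sum := by
  induction L with
  | nil => simp [mword]
  | cons i L ih =>
    rw [mword, List.count_append, ih, List.count_replicate, List.map_cons, List.sum_cons, add_comm]
    simp

lemma mword_sum (e : Fin m → Dir m) (α : Fin m → ℕ) (r : ℝ) (he : ∀ i, dord (e i) = r)
    (L : List (Fin m)) :
    ((mword e α L).map dord).sum = r * ((L.map fun i => α i).sum : ℕ) := by
  induction L with
  | nil => simp [mword]
  | cons i L ih =>
    rw [mword, List.map_append, List.sum_append, ih, List.map_replicate, List.sum_replicate, he,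
      List.map_cons, List.sum_cons]
    push_cast
    rw [nsmul_eq_mul]
    ring

lemma cword_sum (α β : Fin m → ℕ) (n : ℕ) :
    ((cword α β n).map dord).sum = -(degS α : ℝ) + n := by
  rw [cword, List.map_append, List.map_append, List.sum_append, List.sum_append,
    mword_sum _ α (-1) (fun _ => rfl), mword_sum _ β 0 (fun _ => rfl), List.map_replicate,
    List.sum_replicate, degS, Fin.sum_univ_def]
  simp [dord]

/-- Every word of directions is a rearrangement of the canonical word with the same multiplicities. -/
lemma perm_cword (w : List (Dir m)) :
    w.Perm (cword (fun i => w.count (some (Sum.inr i))) (fun i => w.count (some (Sum.inl i)))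
      (w.count none)) := by
  rw [List.perm_iff_count]
  intro a
  rw [cword, List.count_append, List.count_append, mword_count, mword_count,
    ← Fin.sum_univ_def, ← Fin.sum_univ_def, List.count_replicate]
  rcases a with _ | a | a <;> simp

lemma InC_of_InPK {d : ℝ} {k : Eu m → ℝ → Eu m → ℂ} (h : InPK d k) :
    InC (d + 1) (fun z : ZZ m => k z.1.1 z.1.2 z.2) := by
  refine ⟨h.1, fun w l => ?_⟩
  set α : Fin m → ℕ := fun i => w.count (some (Sum.inr i)) with hα
  set β : Fin m → ℕ := fun i => w.count (some (Sum.inl i)) with hβ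
  have hp : w.Perm (cword α β (w.count none)) := perm_cword w
  have hfin := h.2 α β l (w.count none)
  refine ⟨(pkSemiE d α β l (w.count none) k).toReal, fun z hz => ?_⟩
  have h1 : ENNReal.ofReal (jap z.2 ^ (-(d + 1 - (degS α : ℝ) - (l : ℝ) + ((w.count none : ℕ) : ℝ))) *
      ‖pkDeriv α β l (w.count none) k z.1.1 z.1.2 z.2‖) ≤ pkSemiE d α β l (w.count none) k :=
    le_iSup_of_le z.1.1 (le_iSup_of_le z.2 (le_iSup_of_le ⟨z.1.2, hz⟩ le_rfl))
  have h2 := (ENNReal.ofReal_le_iff_le_toReal hfin).mp h1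
  rw [pkDeriv_eq h.1 α β l _ z.1.1 hz z.2, norm_mul, norm_pow, Complex.norm_real,
    Real.norm_of_nonneg (show 0 ≤ z.1.2 from hz), Real.rpow_neg (jap_pos _).le,
    inv_mul_le_iff₀ (Real.rpow_pos_of_pos (jap_pos _) _)] at h2
  rw [Dw_perm hp h.1 hz, (hp.map dord).sum_eq, cword_sum, mul_comm (ENNReal.toReal _)]
  have he : d + 1 + (-(degS α : ℝ) + ((w.count none : ℕ) : ℝ)) - l
      = d + 1 - (degS α : ℝ) - (l : ℝ) + ((w.count none : ℕ) : ℝ) := by ring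
  rw [he]
  exact h2

lemma InPK_of_InC {d : ℝ} {k : Eu m → ℝ → Eu m → ℂ}
    (h : InC (d + 1) (fun z : ZZ m => k z.1.1 z.1.2 z.2)) : InPK d k := by
  refine ⟨h.smooth, fun α β l n => ?_⟩
  obtain ⟨C, hC⟩ := h.bdw (cword α β n) l
  refine ne_top_of_le_ne_top (ENNReal.ofReal_ne_top (r := C)) ?_
  refine iSup_le fun x => iSup_le fun ξ => iSup_le fun t => ENNReal.ofReal_le_ofReal ?_
  have h1 := hC ((x, t.1), ξ) t.2
  rw [pkDeriv_eq h.smooth α β l n x t.2 ξ, norm_mul, norm_pow, Complex.norm_real,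
    Real.norm_of_nonneg (show 0 ≤ t.1 from t.2), Real.rpow_neg (jap_pos _).le,
    inv_mul_le_iff₀ (Real.rpow_pos_of_pos (jap_pos _) _), mul_comm (jap ξ ^ _)]
  rw [cword_sum] at h1
  have he : d + 1 + (-(degS α : ℝ) + (n : ℝ)) - l
      = d + 1 - (degS α : ℝ) - (l : ℝ) + (n : ℝ) := by ring
  rw [he] at h1
  exact h1

end bridge

/-! ### Fourier inversion and translations -/

section inversion
variable {m : ℕ}

lemma pF_continuous {g : Eu m → ℂ} (hg : Integrable g) : Continuous (pF g) := by
  have he : pF g = fun ζ => ∫ z, ek z ζ * g z := by funext ζ; exact pF_eq g ζ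
  rw [he]
  refine continuous_of_dominated (bound := fun z => ‖g z‖)
    (fun ζ => (integrable_ek_mul hg ζ).aestronglyMeasurable)
    (fun ζ => Eventually.of_forall fun z => by rw [norm_mul, norm_ek, one_mul]) hg.norm
    (Eventually.of_forall fun z => ?_)
  exact (ek_cont (f := fun _ => z) continuous_const continuous_id).mul continuous_const

lemma Wt.pF_le {φ : Eu m → ℂ} (h : Wt (fun (_ : Unit) z => φ z) fun _ z => Om z) (R : ℕ) :
    ∃ C : ℝ, 0 ≤ C ∧ ∀ ζ, ‖pF φ ζ‖ ≤ C * Om ζ ^ R := by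
  have h' : Wt (fun (_ : Unit) z => φ z) fun _ z => 1 * Om z := by simpa using h
  obtain ⟨C, h0, hC⟩ := Wt.decay (B := fun _ => 1) h' R
  exact ⟨C, h0, fun ζ => by simpa using hC () ζ⟩

lemma Wt.int1 {φ : Eu m → ℂ} (h : Wt (fun (_ : Unit) z => φ z) fun _ z => Om z) :
    Integrable φ := by
  have h' : Wt (fun (_ : Unit) z => φ z) fun _ z => 1 * Om z := by simpa using h
  exact Wt.integrable (B := fun _ => 1) h' ()

lemma Wt.pF_integrable {φ : Eu m → ℂ} (h : Wt (fun (_ : Unit) z => φ z) fun _ z => Om z) :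
    Integrable (pF φ) := by
  obtain ⟨C, _, hC⟩ := h.pF_le 1
  exact (Om_integrable.const_mul C).mono' (pF_continuous h.int1).aestronglyMeasurable
    (Eventually.of_forall fun ζ => by simpa using hC ζ)

lemma inner_eq_dotp (v w : EuclideanSpace ℝ (Fin m)) :
    inner ℝ v w = dotp (WithLp.ofLp v) (WithLp.ofLp w) := by
  simp [PiLp.inner_apply, dotp, mul_comm]

lemma dotp_smul (c : ℝ) (v w : Eu m) : dotp v (c • w) = c * dotp v w := by
  simp only [dotp, Finset.mul_sum, Pi.smul_apply, smul_eq_mul]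
  exact Finset.sum_congr rfl fun _ _ => by ring

/-- Fourier inversion with the normalisation of `pF`. -/
lemma pF_inversion {φ : Eu m → ℂ} (h : Wt (fun (_ : Unit) z => φ z) fun _ z => Om z) (x : Eu m) :
    ∫ η, ek (-x) η * pF φ η = (((2 * Real.pi) ^ m : ℝ) : ℂ) * φ x := by
  let f : EuclideanSpace ℝ (Fin m) → ℂ := fun v => φ (WithLp.ofLp v)
  have hmp : MeasurePreserving (WithLp.ofLp : EuclideanSpace ℝ (Fin m) → Eu m) volume volume :=
    PiLp.volume_preserving_ofLp (Fin m)
  have hemb : MeasurableEmbedding (WithLp.ofLp : EuclideanSpace ℝ (Fin m) → Eu m) :=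
    (MeasurableEquiv.toLp 2 (Fin m → ℝ)).symm.measurableEmbedding
  have hF : FourierTransform.fourier f = fun w : EuclideanSpace ℝ (Fin m) => pF φ ((2 * Real.pi) • WithLp.ofLp w) := by
    funext w
    rw [Real.fourier_eq', pF_eq, ← hmp.integral_comp hemb]
    refine integral_congr_ae (Eventually.of_forall fun v => ?_)
    simp only [f, ek, dotp_smul, inner_eq_dotp, smul_eq_mul]
    congr 2
    push_cast; ring
  have h2pi : (2 * Real.pi) ≠ 0 := by positivity
  have hfc : Continuous f := (h.smooth ()).continuous.comp (by fun_prop)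
  have hfi : Integrable f := (hmp.integrable_comp_emb hemb).mpr h.int1
  have hFi : Integrable (FourierTransform.fourier f) := by
    rw [hF]
    exact (hmp.integrable_comp_emb hemb (g := fun w => pF φ ((2 * Real.pi) • w))).mpr
      (h.pF_integrable.comp_smul h2pi)
  have hinv := congrFun (hfc.fourierInv_fourier_eq hfi hFi) (WithLp.toLp 2 x)
  rw [Real.fourierInv_eq', hF] at hinv
  have h3 : ∫ v : EuclideanSpace ℝ (Fin m), Complex.exp ((↑(2 * Real.pi * inner ℝ v (WithLp.toLp 2 x)) * Complex.I)) •
      pF φ ((2 * Real.pi) • WithLp.ofLp v) =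
      ∫ v : EuclideanSpace ℝ (Fin m), (fun v : Eu m => (fun η => ek (-x) η * pF φ η) ((2 * Real.pi) • v)) (WithLp.ofLp v) := by
    refine integral_congr_ae (Eventually.of_forall fun v => ?_)
    simp only [ek_neg_left, dotp_smul, inner_eq_dotp, smul_eq_mul]
    rw [dotp_comm' x]
    congr 2
    push_cast; ring
  rw [h3, hmp.integral_comp hemb (g := fun v : Eu m => (fun η => ek (-x) η * pF φ η) ((2 * Real.pi) • v)),
    Measure.integral_comp_smul (μ := (volume : Measure (Eu m))) (fun η => ek (-x) η * pF φ η)] at hinv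
  have h4 : f (WithLp.toLp 2 x) = φ x := rfl
  rw [h4] at hinv
  rw [← hinv, Module.finrank_fin_fun, Complex.real_smul, ← mul_assoc, ← Complex.ofReal_mul,
    abs_of_pos (by positivity), mul_inv_cancel₀ (by positivity), Complex.ofReal_one, one_mul]

lemma Wt.shift {φ : Eu m → ℂ} (h : Wt (fun (_ : Unit) z => φ z) fun _ z => Om z) (y : Eu m) :
    Wt (fun (_ : Unit) z => φ (y + z)) fun _ z => Om z := by
  refine Wt.of_class (fun f => ∃ φ : Eu m → ℂ, Wt (fun (_ : Unit) z => φ z) (fun _ z => Om z) ∧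
    f = fun _ z => φ (y + z)) ?_ ?_ ?_ ⟨φ, h, rfl⟩
  · rintro _ ⟨φ, h, rfl⟩ _
    exact (h.smooth ()).comp (contDiff_const.add contDiff_id)
  · rintro _ ⟨φ, h, rfl⟩
    obtain ⟨C, h0, hC⟩ := w_bd h
    refine ⟨C * (2 ^ m * Pj y), fun _ z => (hC _).trans ?_⟩
    have h1 := Pj_add_le (-y) (y + z)
    have hy : Pj (-y) = Pj y := by simp [Pj]
    rw [neg_add_cancel_left, hy] at h1
    rw [mul_assoc]
    refine mul_le_mul_of_nonneg_left ?_ h0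
    unfold Om
    rw [inv_eq_one_div, inv_eq_one_div, mul_one_div, div_le_div_iff₀ (Pj_pos _) (Pj_pos _)]
    linarith
  · rintro _ ⟨φ, h, rfl⟩ j
    refine ⟨_, h.pd j, ?_⟩
    funext _ z
    unfold _root_.pd
    rw [fderiv_comp_add_left]

end inversion

/-! ### Integration by parts in the covariable -/

section parts
variable {m : ℕ} {φ φ₁ : Eu m → ℂ} {c : ZZ m → ℂ} {ν : ℝ}

lemma Ug_integrable (hφ : Wt (fun (_ : Unit) z => φ z) fun _ z => Om z) (hc : InC ν c)
    {p : ZZ m} (hp : p ∈ HS m) : Integrable (Ug φ c p) := by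
  obtain ⟨C, _, hC⟩ := Ug_bound hφ hc 0
  refine (Om_integrable.const_mul (C * jap p.2 ^ (ν - (0 : ℕ)))).mono'
    (Ug_continuous hφ hc hp).aestronglyMeasurable (Eventually.of_forall fun ζ => ?_)
  simpa using hC p hp ζ

lemma Ug_integrand_integrable (hφ : Wt (fun (_ : Unit) z => φ z) fun _ z => Om z)
    (hc : InC ν c) {p : ZZ m} (hp : p ∈ HS m) (ζ : Eu m) :
    Integrable (fun z => ek z ζ * (φ z * c (tr z ζ p))) := by
  obtain ⟨C, hC⟩ := integrand_loc hφ hc (p, ζ)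
  exact (Om_integrable.const_mul C).mono' (integrand_cont hφ hc hp ζ ζ).aestronglyMeasurable
    (Eventually.of_forall fun z => hC.self_of_nhds hp z)

/-- The `ζⱼ`-derivative of `Ug φ c p`; the exponential contributes `-i zⱼ φ = φ - φ₁`, where
`φ₁ = (1 + i zⱼ) φ` is integrable by assumption. -/
lemma Ug_hasLineDerivAt (j : Fin m) (hφ : Wt (fun (_ : Unit) z => φ z) fun _ z => Om z)
    (hφ₁ : Wt (fun (_ : Unit) z => φ₁ z) fun _ z => Om z)
    (he : ∀ z, φ₁ z = (1 + Complex.I * (z j : ℂ)) * φ z) (hc : InC ν c)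
    {p : ZZ m} (hp : p ∈ HS m) (ζ : Eu m) :
    HasLineDerivAt ℝ (Ug φ c p)
      (Ug φ c p ζ + Ug φ (Dd (some (Sum.inr j)) c) p ζ - Ug φ₁ c p ζ) ζ (Pi.single j 1) := by
  set e : Eu m := Pi.single j 1 with hedef
  have hD := hc.Dd (some (Sum.inr j))
  -- the bounds are locally uniform in the covariable
  obtain ⟨C1, hC1⟩ := integrand_loc hφ hc (p, ζ)
  obtain ⟨C2, hC2⟩ := integrand_loc hφ hD (p, ζ)
  obtain ⟨C3, hC3⟩ := integrand_loc hφ₁ hc (p, ζ)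
  have hcont : Continuous (fun s : ℝ => (p, ζ + s • e)) := by fun_prop
  have h0 : (p, ζ + (0 : ℝ) • e) = (p, ζ) := by simp
  have hev : ∀ᶠ s : ℝ in 𝓝 0, ∀ z,
      ‖ek z (ζ + s • e) * (φ z * c (tr z (ζ + s • e) p)) +
        ek z (ζ + s • e) * (φ z * Dd (some (Sum.inr j)) c (tr z (ζ + s • e) p)) -
        ek z (ζ + s • e) * (φ₁ z * c (tr z (ζ + s • e) p))‖ ≤ (C1 + C2 + C3) * Om z := by
    have ht : Tendsto (fun s : ℝ => (p, ζ + s • e)) (𝓝 0) (𝓝 (p, ζ)) := by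
      rw [← h0]; exact hcont.continuousAt
    filter_upwards [ht.eventually hC1, ht.eventually hC2, ht.eventually hC3] with s h1 h2 h3 z
    refine (norm_sub_le _ _).trans ((add_le_add ((norm_add_le _ _).trans
      (add_le_add (h1 hp z) (h2 hp z))) (h3 hp z)).trans ?_)
    linarith
  obtain ⟨ε, hε, hball⟩ := Metric.eventually_nhds_iff_ball.mp hev
  unfold HasLineDerivAt
  have key := hasDerivAt_integral_of_dominated_loc_of_deriv_le (𝕜 := ℝ)
    (μ := (volume : Measure (Eu m)))
    (F := fun (s : ℝ) z => ek z (ζ + s • e) * (φ z * c (tr z (ζ + s • e) p)))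
    (F' := fun (s : ℝ) z => ek z (ζ + s • e) * (φ z * c (tr z (ζ + s • e) p)) +
        ek z (ζ + s • e) * (φ z * Dd (some (Sum.inr j)) c (tr z (ζ + s • e) p)) -
        ek z (ζ + s • e) * (φ₁ z * c (tr z (ζ + s • e) p)))
    (x₀ := (0 : ℝ)) (s := Metric.ball 0 ε) (bound := fun z => (C1 + C2 + C3) * Om z)
    (Metric.ball_mem_nhds 0 hε)
    (Eventually.of_forall fun s => (integrand_cont hφ hc hp _ _).aestronglyMeasurable)
    (Ug_integrand_integrable hφ hc hp _)
    (((integrand_cont hφ hc hp _ _).add (integrand_cont hφ hD hp _ _)).sub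
      (integrand_cont hφ₁ hc hp _ _)).aestronglyMeasurable
    (Eventually.of_forall fun z s hs => hball s hs z)
    (Om_integrable.const_mul _)
    (Eventually.of_forall fun z s hs => by
      have hline : HasDerivAt (fun s : ℝ => ζ + s • e) e s := by
        simpa using ((hasDerivAt_id s).smul_const e).const_add ζ
      have h1 : HasDerivAt (fun s : ℝ => ek z (ζ + s • e))
          (-(Complex.I * (z j : ℂ)) * ek z (ζ + s • e)) s := by
        have h := (ek_hasFDerivAt (ζ + s • e) z)
        have h' := h.comp_hasDerivAt s hline
        have h2 := pd_ek j (ζ + s • e) z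
        rw [h.fderiv] at h2
        rw [hedef] at h'
        rw [h2] at h'
        simpa only [Function.comp_def, ek_comm _ z] using h'
      have h2 : HasDerivAt (fun s : ℝ => c (tr z (ζ + s • e) p))
          (Dd (some (Sum.inr j)) c (tr z (ζ + s • e) p)) s := by
        have hs' : ∀ ζ : Eu m, tr 0 ζ (tr z 0 p) = tr z ζ p := fun ζ => by simp [tr]
        have hdiff : DifferentiableAt ℝ (fun ζ => c (tr z ζ p)) (ζ + s • e) := by
          have := sliceXi_smooth hc.smooth (tr_mem hp z 0)
          simp only [hs'] at this
          exact (this.differentiable (by simp)) _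
        have hpd := sliceXi_pd hc.smooth (tr_mem hp z 0) j (ζ + s • e)
        simp only [hs'] at hpd
        have h' := hdiff.hasFDerivAt.comp_hasDerivAt s hline
        rw [← hpd]
        exact h'
      refine (h1.mul (h2.const_mul (φ z))).congr_deriv ?_
      rw [he]
      ring)
  refine key.2.congr_deriv ?_
  simp only [zero_smul, add_zero]
  rw [integral_sub, integral_add]
  · rfl
  · exact Ug_integrand_integrable hφ hc hp _
  · exact Ug_integrand_integrable hφ hD hp _
  · exact (Ug_integrand_integrable hφ hc hp _).add (Ug_integrand_integrable hφ hD hp _)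
  · exact Ug_integrand_integrable hφ₁ hc hp _

/-- The operator `1 + ∂_{ξⱼ}`. -/
def P1 (j : Fin m) (c : ZZ m → ℂ) (z : ZZ m) : ℂ := c z + Dd (some (Sum.inr j)) c z

lemma InC.P1 (hc : InC ν c) (j : Fin m) : InC ν (P1 j c) :=
  hc.add ((hc.Dd (some (Sum.inr j))).mono (by simp [dord]))

/-- Integration by parts in `ζ`: the `z`-integral turns `-∂_{ζⱼ}` on the exponential into the
factor `i zⱼ`, so `1 + ∂_{ξⱼ}` on the symbol is traded for a factor `1 + i zⱼ`. -/
lemma integral_Ug_P1 (j : Fin m) (hφ : Wt (fun (_ : Unit) z => φ z) fun _ z => Om z)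
    (hφ₁ : Wt (fun (_ : Unit) z => φ₁ z) fun _ z => Om z)
    (he : ∀ z, φ₁ z = (1 + Complex.I * (z j : ℂ)) * φ z) (hc : InC ν c)
    {p : ZZ m} (hp : p ∈ HS m) :
    ∫ ζ, Ug φ (_root_.P1 j c) p ζ = ∫ ζ, Ug φ₁ c p ζ := by
  have hD := hc.Dd (some (Sum.inr j))
  have i1 := Ug_integrable hφ hc hp
  have i2 := Ug_integrable hφ hD hp
  have i3 := Ug_integrable hφ₁ hc hp
  have i12 : Integrable (fun ζ => Ug φ c p ζ + Ug φ (Dd (some (Sum.inr j)) c) p ζ) := i1.add i2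
  have i123 : Integrable
      (fun ζ => Ug φ c p ζ + Ug φ (Dd (some (Sum.inr j)) c) p ζ - Ug φ₁ c p ζ) := i12.sub i3
  have h1 := integral_bilinear_hasLineDerivAt_right_eq_neg_left_of_integrable
    (μ := (volume : Measure (Eu m))) (B := ContinuousLinearMap.mul ℝ ℂ)
    (f := fun _ => (1 : ℂ)) (f' := fun _ => 0) (g := Ug φ c p)
    (g' := fun ζ => Ug φ c p ζ + Ug φ (Dd (some (Sum.inr j)) c) p ζ - Ug φ₁ c p ζ)
    (v := Pi.single j 1) (by simp) (by simpa using i123) (by simpa using i1)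
    (fun x _ => hasDerivAt_const _ _)
    (fun x _ => Ug_hasLineDerivAt j hφ hφ₁ he hc hp x)
  simp only [ContinuousLinearMap.mul_apply', one_mul, zero_mul, integral_zero, neg_zero] at h1
  rw [integral_sub i12 i3, sub_eq_zero] at h1
  rw [← h1]
  refine integral_congr_ae (Eventually.of_forall fun ζ => ?_)
  simp only [Ug_eq]
  rw [← integral_add (Ug_integrand_integrable hφ hc hp ζ) (Ug_integrand_integrable hφ hD hp ζ)]
  refine integral_congr_ae (Eventually.of_forall fun z => ?_)
  simp only [_root_.P1]
  ring

/-- The composition of the operators `1 + ∂_{ξⱼ}` over the list `L`. -/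
def PL (L : List (Fin m)) (c : ZZ m → ℂ) : ZZ m → ℂ := L.foldr _root_.P1 c

lemma InC.PL (hc : InC ν c) (L : List (Fin m)) : InC ν (PL L c) := by
  induction L with
  | nil => exact hc
  | cons j L ih => exact ih.P1 j

lemma wl_norm_le (L : List (Fin m)) (z : Eu m) : (L.map fun j => ‖rr j z‖).prod ≤ 1 := by
  induction L with
  | nil => simp
  | cons j L ih =>
    rw [List.map_cons, List.prod_cons]
    exact mul_le_one₀ (norm_rr_le_one j z)
      (List.prod_nonneg (by simp only [List.mem_map]; rintro _ ⟨j, _, rfl⟩; exact norm_nonneg _)) ih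

lemma Wt.wl_mul (hφ : Wt (fun (_ : Unit) z => φ z) fun _ z => Om z) (L : List (Fin m)) :
    Wt (fun (_ : Unit) z => wl L z * φ z) fun _ z => Om z := by
  have h0 : ∀ z : Eu m, 0 ≤ (L.map fun j => ‖rr j z‖).prod := fun z =>
    List.prod_nonneg (by simp only [List.mem_map]; rintro _ ⟨j, _, rfl⟩; exact norm_nonneg _)
  refine ((wt_wl L).mul hφ).mono (fun _ z => mul_nonneg (h0 z) (Om_nonneg z)) 1 fun _ z => ?_
  exact mul_le_mul_of_nonneg_right (wl_norm_le L z) (Om_nonneg z)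

/-- The weight `∏ (1 + i zⱼ)⁻¹` is removed by integrating by parts in the covariable. -/
lemma integral_Ug_PL (L : List (Fin m)) (hφ : Wt (fun (_ : Unit) z => φ z) fun _ z => Om z)
    (hc : InC ν c) {p : ZZ m} (hp : p ∈ HS m) :
    ∫ ζ, Ug (fun z => wl L z * φ z) (_root_.PL L c) p ζ = ∫ ζ, Ug φ c p ζ := by
  induction L with
  | nil => simp [wl, _root_.PL]
  | cons j L ih =>
    rw [← ih]
    refine integral_Ug_P1 j (hφ.wl_mul (j :: L)) (hφ.wl_mul L) (fun z => ?_) (hc.PL L) hp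
    have : wl (j :: L) z = rr j z * wl L z := by simp [wl]
    rw [this, ← mul_assoc, ← mul_assoc, one_add_mul_rr, one_mul]

end parts

/-! ### The key identity -/

section exchange
variable {m : ℕ} {w ψ : Eu m → ℂ} {b : ZZ m → ℂ} {μ : ℝ}

lemma ek_sub_right (z ξ η : Eu m) : ek z (ξ - η) = ek z ξ * ek (-z) η := by
  rw [ek_comm z (ξ - η), sub_eq_add_neg, ek_add_left, ek_comm ξ, ek_comm (-η)]
  congr 1
  unfold ek dotp
  simp

lemma Om_sub_le (ξ η : Eu m) : Om (ξ - η) ≤ 2 ^ m * Pj η * Om ξ := by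
  have h := Pj_add_le (ξ - η) η
  rw [sub_add_cancel] at h
  unfold Om
  rw [inv_eq_one_div, inv_eq_one_div, mul_one_div, div_le_div_iff₀ (Pj_pos _) (Pj_pos _)]
  linarith

lemma exchange_integrable (hw : Wt (fun (_ : Unit) z => w z) fun _ z => Om z)
    (hψ : Wt (fun (_ : Unit) z => ψ z) fun _ z => Om z) (hb : InC μ b) (y : Eu m) {t : ℝ}
    (ht : 0 ≤ t) :
    Integrable (fun q : Eu m × Eu m =>
      ek (-y) q.1 * pF ψ q.1 * Ug w b ((y, t), q.1) (q.2 - q.1)) (volume.prod volume) := by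
  obtain ⟨C, h0, hC⟩ := Ug_bound hw hb 0
  obtain ⟨n, hn⟩ := exists_nat_ge |μ - (0 : ℕ)|
  obtain ⟨D, hD0, hD⟩ := hψ.pF_le (n + 2)
  have hcont : Continuous (fun q : Eu m × Eu m =>
      ek (-y) q.1 * pF ψ q.1 * Ug w b ((y, t), q.1) (q.2 - q.1)) := by
    have h1 : Continuous (fun q : Eu m × Eu m => ek (-y) q.1) :=
      ek_cont (X := Eu m × Eu m) (f := fun _ => -y) (g := fun q => q.1) continuous_const
        continuous_fst
    have h2 : Continuous (fun q : Eu m × Eu m => pF ψ q.1) :=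
      (pF_continuous hψ.int1).comp continuous_fst
    have h3 : Continuous (fun q : Eu m × Eu m => ((((y, t), q.1) : ZZ m), q.2 - q.1)) := by
      fun_prop
    have h4 : ∀ q : Eu m × Eu m,
        ((((y, t), q.1) : ZZ m), q.2 - q.1) ∈ HS m ×ˢ (Set.univ : Set (Eu m)) :=
      fun q => ⟨ht, Set.mem_univ _⟩
    have h5 := (Ug_continuousOn hw hb).comp_continuous h3 h4
    exact (h1.mul h2).mul h5
  refine ((Om_integrable.mul_prod Om_integrable).const_mul (D * C * 2 ^ m)).mono'
    hcont.aestronglyMeasurable (Eventually.of_forall fun q => ?_)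
  have h1 := hC ((y, t), q.1) ht (q.2 - q.1)
  rw [pow_zero, one_mul] at h1
  have h2 := jap_rpow_le_Pj _ n hn q.1
  have h3 := Om_sub_le q.2 q.1
  have hP := (Pj_pos q.1).le
  rw [norm_mul, norm_mul, norm_ek, one_mul]
  calc ‖pF ψ q.1‖ * ‖Ug w b ((y, t), q.1) (q.2 - q.1)‖
      ≤ (D * Om q.1 ^ (n + 2)) * (C * Pj q.1 ^ n * (2 ^ m * Pj q.1 * Om q.2)) := by
        refine mul_le_mul (hD _) (h1.trans (mul_le_mul (mul_le_mul_of_nonneg_left h2 h0) h3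
          (Om_nonneg _) (mul_nonneg h0 (pow_nonneg hP n)))) (norm_nonneg _)
          (mul_nonneg hD0 (pow_nonneg (Om_nonneg _) _))
    _ = D * C * 2 ^ m * ((Pj q.1 * Om q.1) ^ (n + 1) * Om q.1 * Om q.2) := by
        rw [mul_pow]; ring
    _ = _ := by rw [Pj_mul_Om, one_pow, one_mul]

/-- Inner integral of the exchange: Fourier inversion for `ψ` under the `z`-integral. -/
lemma exchange_inner (hw : Wt (fun (_ : Unit) z => w z) fun _ z => Om z)
    (hψ : Wt (fun (_ : Unit) z => ψ z) fun _ z => Om z) (hb : InC μ b) (y : Eu m) {t : ℝ}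
    (ht : 0 ≤ t) (ξ : Eu m) :
    ∫ η, ek (-y) η * pF ψ η * Ug w b ((y, t), η) (ξ - η) =
      (((2 * Real.pi) ^ m : ℝ) : ℂ) * Ug (fun z => w z * ψ (y + z)) b ((y, t), 0) ξ := by
  have hp : (((y, t), 0) : ZZ m) ∈ HS m := ht
  have hs : Integrable (fun z => ek z ξ * (w z * b (tr z ξ ((y, t), 0)))) :=
    Ug_integrand_integrable hw hb hp ξ
  have h1 : ∀ η, ek (-y) η * pF ψ η * Ug w b ((y, t), η) (ξ - η) =
      ∫ z, ek (-(y + z)) η * (pF ψ η * (ek z ξ * (w z * b (tr z ξ ((y, t), 0))))) := by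
    intro η
    rw [Ug_eq, ← integral_const_mul]
    refine integral_congr_ae (Eventually.of_forall fun z => ?_)
    have htr : tr z (ξ - η) ((y, t), η) = tr z ξ ((y, t), 0) := by simp [tr]
    simp only [htr, ek_sub_right, neg_add, ek_add_left]
    ring
  simp only [h1]
  rw [integral_integral_swap]
  · rw [Ug_eq, ← integral_const_mul]
    refine integral_congr_ae (Eventually.of_forall fun z => ?_)
    simp only [← mul_assoc]
    simp only [integral_mul_const]
    rw [pF_inversion hψ]
    ring
  · refine (hψ.pF_integrable.mul_prod hs).mono ?_ (Eventually.of_forall fun q => ?_)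
    · refine AEStronglyMeasurable.mul ?_ (hψ.pF_integrable.mul_prod hs).aestronglyMeasurable
      have : Continuous (fun q : Eu m × Eu m => ek (-(y + q.2)) q.1) :=
        ek_cont (X := Eu m × Eu m) (f := fun q => -(y + q.2)) (g := fun q => q.1)
          (by fun_prop) continuous_fst
      exact this.aestronglyMeasurable
    · simp only [Function.uncurry]
      rw [norm_mul, norm_ek, one_mul]

/-- Applying the symbol `UU w b` to `ψ`: after the shift `ζ = ξ - η` the `η`-integral is evaluated
by Fourier inversion, which leaves the weight times the translate of `ψ` as a single amplitude. -/
lemma exchange (hw : Wt (fun (_ : Unit) z => w z) fun _ z => Om z)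
    (hψ : Wt (fun (_ : Unit) z => ψ z) fun _ z => Om z) (hb : InC μ b) (y : Eu m) {t : ℝ}
    (ht : 0 ≤ t) :
    ∫ η, ek (-y) η * (UU w b ((y, t), η) * pF ψ η) =
      (((2 * Real.pi) ^ m : ℝ) : ℂ) *
        ∫ ξ, Ug (fun z => w z * ψ (y + z)) b ((y, t), 0) ξ := by
  have h1 : ∀ η, ek (-y) η * (UU w b ((y, t), η) * pF ψ η) =
      ∫ ξ, ek (-y) η * pF ψ η * Ug w b ((y, t), η) (ξ - η) := by
    intro η
    rw [integral_const_mul, integral_sub_right_eq_self (Ug w b ((y, t), η))]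
    unfold UU
    ring
  simp only [h1]
  rw [integral_integral_swap (exchange_integrable hw hψ hb y ht)]
  simp only [exchange_inner hw hψ hb y ht]
  exact integral_const_mul _ _

/-- The symbol `(2π)^{-m} ∏ (1 + i zⱼ)⁻² · ∏ (1 + ∂_{ξⱼ})² a`, quantised by `UU`. -/
def KK (a : ZZ m → ℂ) : ZZ m → ℂ := UU (wgt m) (PL (List.finRange m ++ List.finRange m) a)

/-- The Fourier transform of `ψ a(·, t, ξ')` at `ξ'`. -/
def JJ (a : ZZ m → ℂ) (ψ : Eu m → ℂ) (t : ℝ) (ξ : Eu m) : ℂ :=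
  pF (fun x => ψ x * a ((x, t), ξ)) ξ

/-- The Poisson operator with symbol `KK a` is the operator with amplitude `a(y', t, ξ')`. -/
lemma key_identity {a : ZZ m → ℂ} (ha : InC μ a)
    (hψ : Wt (fun (_ : Unit) z => ψ z) fun _ z => Om z) (y : Eu m) {t : ℝ} (ht : 0 ≤ t) :
    ∫ η, ek (-y) η * (KK a ((y, t), η) * pF ψ η) = ∫ ξ, ek (-y) ξ * JJ a ψ t ξ := by
  have hp : (((y, t), 0) : ZZ m) ∈ HS m := ht
  set LL := List.finRange m ++ List.finRange m with hLL
  unfold KK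
  rw [exchange (wt_wgt m) hψ (ha.PL LL) y ht, ← integral_const_mul]
  have h2pi : ((((2 * Real.pi) ^ m : ℝ)) : ℂ) ≠ 0 := by
    exact_mod_cast (by positivity : (2 * Real.pi) ^ m ≠ 0)
  have h1 : ∀ ξ, (((2 * Real.pi) ^ m : ℝ) : ℂ) *
      Ug (fun z => wgt m z * ψ (y + z)) (PL LL a) ((y, t), 0) ξ =
      Ug (fun z => wl LL z * ψ (y + z)) (PL LL a) ((y, t), 0) ξ := by
    intro ξ
    rw [Ug_eq, Ug_eq, ← integral_const_mul]
    refine integral_congr_ae (Eventually.of_forall fun z => ?_)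
    simp only [wgt, ← hLL]
    field_simp
  simp only [h1]
  rw [integral_Ug_PL LL (hψ.shift y) ha hp]
  refine integral_congr_ae (Eventually.of_forall fun ξ => ?_)
  simp only [JJ]
  rw [Ug_eq, pF_eq, ← integral_const_mul,
    ← integral_add_left_eq_self (fun x => ek (-y) ξ * (ek x ξ * (ψ x * a ((x, t), ξ)))) y]
  refine integral_congr_ae (Eventually.of_forall fun z => ?_)
  simp only [tr, zero_add]
  rw [← mul_assoc (ek (-y) ξ), ← ek_add_left, neg_add_cancel_left]

end exchange

/-! ### The two pairings -/

section pairings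
variable {m : ℕ} {a : ZZ m → ℂ} {μ : ℝ}

lemma conj_ek (x ξ : Eu m) : (starRingEnd ℂ) (ek x ξ) = ek (-x) ξ := by
  unfold ek
  rw [← Complex.exp_conj]
  congr 1
  simp [dotp]

lemma hatu_eq (u : Eu (m + 1) → ℂ) (ξ : Eu m) (t : ℝ) :
    hatu u ξ t = ∫ y : Eu m, ek y ξ * u (Fin.snoc (α := fun _ => ℝ) y t) := rfl

lemma snoc_continuous :
    Continuous (fun q : ℝ × Eu m => (Fin.snoc (α := fun _ => ℝ) q.2 q.1 : Eu (m + 1))) := by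
  have : (fun q : ℝ × Eu m => (Fin.snoc (α := fun _ => ℝ) q.2 q.1 : Eu (m + 1))) =
      fun q => Pi.single (Fin.last m) q.1 + snocL m q.2 := by
    funext q; exact snoc_eq _ _
  rw [this]
  refine Continuous.add ?_ ((snocL m).continuous.comp continuous_snd)
  exact (continuous_single (A := fun _ : Fin (m + 1) => ℝ) (Fin.last m)).comp continuous_fst

lemma slice_bound (u : SchwartzMap (Eu (m + 1)) ℂ) : ∃ C : ℝ, 0 ≤ C ∧ ∀ (t : ℝ) (y : Eu m),
    ‖u (Fin.snoc (α := fun _ => ℝ) y t)‖ ≤ C * ((1 + t ^ 2)⁻¹ * Om y) := by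
  obtain ⟨C, hC⟩ := (wt_slice u).bd
  refine ⟨|C|, abs_nonneg C, fun t y => (hC t y).trans (mul_le_mul_of_nonneg_right (le_abs_self C)
    (mul_nonneg (by positivity) (Om_nonneg y)))⟩

lemma inv_one_add_sq_le_one (t : ℝ) : (1 + t ^ 2)⁻¹ ≤ 1 :=
  inv_le_one_of_one_le₀ (by nlinarith [sq_nonneg t])

lemma hatu_continuous (u : SchwartzMap (Eu (m + 1)) ℂ) :
    Continuous (fun q : Eu m × ℝ => hatu (fun y => u y) q.1 q.2) := by
  obtain ⟨C, h0, hC⟩ := slice_bound u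
  simp only [hatu_eq]
  have hcont : Continuous (fun r : (Eu m × ℝ) × Eu m =>
      ek r.2 r.1.1 * u (Fin.snoc (α := fun _ => ℝ) r.2 r.1.2)) := by
    have h1 : Continuous (fun r : (Eu m × ℝ) × Eu m => ek r.2 r.1.1) :=
      ek_cont (X := (Eu m × ℝ) × Eu m) (f := fun r => r.2) (g := fun r => r.1.1) continuous_snd
        (by fun_prop)
    have h2 : Continuous (fun r : (Eu m × ℝ) × Eu m => (r.1.2, r.2)) := by fun_prop
    exact h1.mul (u.continuous.comp (snoc_continuous.comp h2))
  refine continuous_of_dominated (bound := fun y => C * Om y) (fun q => ?_)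
    (fun q => Eventually.of_forall fun y => ?_) (Om_integrable.const_mul C)
    (Eventually.of_forall fun y => ?_)
  · exact (hcont.comp (Continuous.prodMk_right q)).aestronglyMeasurable
  · rw [norm_mul, norm_ek, one_mul]
    refine (hC _ _).trans (mul_le_mul_of_nonneg_left ?_ h0)
    exact mul_le_of_le_one_left (Om_nonneg y) (inv_one_add_sq_le_one _)
  · have hc : Continuous (fun q : Eu m × ℝ => (q, y)) := Continuous.prodMk_left y
    exact Continuous.comp (f := fun q : Eu m × ℝ => (q, y)) (g := fun r : (Eu m × ℝ) × Eu m =>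
      ek r.2 r.1.1 * u (Fin.snoc (α := fun _ => ℝ) r.2 r.1.2)) hcont hc

lemma hatu_bound (u : SchwartzMap (Eu (m + 1)) ℂ) (R : ℕ) : ∃ C : ℝ, 0 ≤ C ∧ ∀ ξ t,
    ‖hatu (m := m) (fun y => u y) ξ t‖ ≤ C * (1 + t ^ 2)⁻¹ * Om ξ ^ R := by
  obtain ⟨C, h0, hC⟩ := Wt.decay (B := fun t : ℝ => (1 + t ^ 2)⁻¹) (wt_slice u) R
  refine ⟨C, h0, fun ξ t => ?_⟩
  have h := hC t ξ
  rwa [abs_of_nonneg (by positivity)] at h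

lemma max_continuous (ha : Sm a) :
    Continuous (fun r : ZZ m => a ((r.1.1, max r.1.2 0), r.2)) := by
  have h1 : Continuous (fun r : ZZ m => (((r.1.1, max r.1.2 0), r.2) : ZZ m)) := by fun_prop
  have h2 : ∀ r : ZZ m, (((r.1.1, max r.1.2 0), r.2) : ZZ m) ∈ HS m := fun r =>
    show (0 : ℝ) ≤ max r.1.2 0 from le_max_right _ _
  have h3 : ContinuousOn a (HS m) := ha.continuousOn
  exact h3.comp_continuous h1 h2

/-- The integrand of the triple integral on the trace side, in `x'` and `q = (ξ', t)`. The `max`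
extends the symbol-kernel to `t < 0` continuously, which gives measurability on the whole space. -/
def Ph (a : ZZ m → ℂ) (u : Eu (m + 1) → ℂ) (ψ : Eu m → ℂ) (x : Eu m) (q : Eu m × ℝ) : ℂ :=
  ek (-x) q.1 * ((starRingEnd ℂ) (a ((x, max q.2 0), q.1)) * hatu u q.1 q.2) *
    (starRingEnd ℂ) (ψ x)

lemma Ph_continuous (ha : Sm a) (u : SchwartzMap (Eu (m + 1)) ℂ) (ψ : SchwartzMap (Eu m) ℂ) :
    Continuous (fun r : Eu m × (Eu m × ℝ) => Ph a (fun y => u y) (fun y => ψ y) r.1 r.2) := by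
  have h1 : Continuous (fun r : Eu m × (Eu m × ℝ) => ek (-r.1) r.2.1) :=
    ek_cont (X := Eu m × (Eu m × ℝ)) (f := fun r => -r.1) (g := fun r => r.2.1) (by fun_prop)
      (by fun_prop)
  have h2 : Continuous (fun r : Eu m × (Eu m × ℝ) => (((r.1, r.2.2), r.2.1) : ZZ m)) := by
    fun_prop
  have h3 := (max_continuous ha).comp h2
  have h4 := (hatu_continuous u).comp (continuous_snd (X := Eu m) (Y := Eu m × ℝ))
  have h5 := ψ.continuous.comp (continuous_fst (X := Eu m) (Y := Eu m × ℝ))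
  exact (h1.mul ((Complex.continuous_conj.comp h3).mul h4)).mul (Complex.continuous_conj.comp h5)

lemma Ph_bound (ha : InC μ a) (u : SchwartzMap (Eu (m + 1)) ℂ) (ψ : SchwartzMap (Eu m) ℂ) :
    ∃ C : ℝ, ∀ x q, ‖Ph a (fun y => u y) (fun y => ψ y) x q‖ ≤
      C * ‖ψ x‖ * (Om q.1 * (1 + q.2 ^ 2)⁻¹) := by
  obtain ⟨A, hA0, hA⟩ := ha.bd 0
  obtain ⟨n, hn⟩ := exists_nat_ge |μ - (0 : ℕ)|
  obtain ⟨D, hD0, hD⟩ := hatu_bound u (n + 1)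
  refine ⟨A * D, fun x q => ?_⟩
  have h1 := hA ((x, max q.2 0), q.1) (show (0 : ℝ) ≤ max q.2 0 from le_max_right _ _)
  rw [pow_zero, one_mul] at h1
  have h2 := h1.trans (mul_le_mul_of_nonneg_left (jap_rpow_le_Pj _ n hn q.1) hA0)
  have h3 := hD q.1 q.2
  unfold Ph
  rw [norm_mul, norm_mul, norm_mul, norm_ek, one_mul, RCLike.norm_conj, RCLike.norm_conj]
  calc ‖a ((x, max q.2 0), q.1)‖ * ‖hatu (fun y => u y) q.1 q.2‖ * ‖ψ x‖
      ≤ (A * Pj q.1 ^ n) * (D * (1 + q.2 ^ 2)⁻¹ * Om q.1 ^ (n + 1)) * ‖ψ x‖ :=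
        mul_le_mul_of_nonneg_right (mul_le_mul h2 h3 (norm_nonneg _)
          (mul_nonneg hA0 (pow_nonneg (Pj_pos _).le _))) (norm_nonneg _)
    _ = A * D * ‖ψ x‖ * ((Pj q.1 * Om q.1) ^ n * Om q.1 * (1 + q.2 ^ 2)⁻¹) := by
        rw [mul_pow]; ring
    _ = _ := by rw [Pj_mul_Om, one_pow, one_mul]

/-- The trace pairing after Fubini, with the integral over `x'` performed first. -/
lemma trace_side {tk : Eu m → ℝ → Eu m → ℂ} (ha : InC μ a)
    (hat : ∀ x t ξ, tk x t ξ = (starRingEnd ℂ) (a ((x, t), ξ)))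
    (u : SchwartzMap (Eu (m + 1)) ℂ) (ψ : SchwartzMap (Eu m) ℂ) :
    (∫ x' : Eu m, OPT tk (fun y => u y) x' * (starRingEnd ℂ) (ψ x')) =
      (((2 * Real.pi) ^ m : ℝ)⁻¹) • ∫ t in Set.Ioi (0 : ℝ), ∫ ξ : Eu m,
        (starRingEnd ℂ) (JJ a (fun y => ψ y) t ξ) * hatu (fun y => u y) ξ t := by
  set ν : Measure ℝ := volume.restrict (Set.Ioi 0) with hν
  obtain ⟨C, hC⟩ := Ph_bound ha u ψ
  have hcont := Ph_continuous ha.smooth u ψ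
  have hOt : Integrable (fun q : Eu m × ℝ => Om q.1 * (1 + q.2 ^ 2)⁻¹) (volume.prod ν) :=
    Om_integrable.mul_prod (integrable_inv_one_add_sq.restrict)
  have hx : ∀ x, Integrable (Ph a (fun y => u y) (fun y => ψ y) x) (volume.prod ν) := fun x =>
    (hOt.const_mul (C * ‖ψ x‖)).mono'
      (hcont.comp (Continuous.prodMk_right x)).aestronglyMeasurable
      (Eventually.of_forall fun q => hC x q)
  have hall : Integrable (Function.uncurry (Ph a (fun y => u y) (fun y => ψ y)))
      (volume.prod (volume.prod ν)) := by
    refine (((wt_schwartz ψ).int1.norm.mul_prod hOt).const_mul C).mono'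
      hcont.aestronglyMeasurable (Eventually.of_forall fun r => ?_)
    rw [← mul_assoc]
    exact hC r.1 r.2
  have h1 : ∀ x, OPT tk (fun y => u y) x * (starRingEnd ℂ) (ψ x) =
      (((2 * Real.pi) ^ m : ℝ)⁻¹) • ∫ q, Ph a (fun y => u y) (fun y => ψ y) x q
        ∂(volume.prod ν) := by
    intro x
    rw [integral_prod _ (hx x), OPT, smul_mul_assoc, ← integral_mul_const]
    congr 1
    refine integral_congr_ae (Eventually.of_forall fun ξ => ?_)
    simp only
    rw [← integral_mul_const]
    refine setIntegral_congr_fun measurableSet_Ioi fun t ht => ?_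
    simp only [Ph, hat, max_eq_left (le_of_lt (show (0 : ℝ) < t from ht)), ek_neg_left]
  simp only [h1]
  rw [integral_smul]
  congr 1
  have h2 : Integrable (fun q => ∫ x, Ph a (fun y => u y) (fun y => ψ y) x q) (volume.prod ν) :=
    hall.integral_prod_right
  rw [integral_integral_swap hall, integral_prod_symm _ h2]
  refine setIntegral_congr_fun measurableSet_Ioi fun t ht => ?_
  refine integral_congr_ae (Eventually.of_forall fun ξ => ?_)
  simp only [JJ]
  rw [pF_eq, ← integral_conj, ← integral_mul_const]
  refine integral_congr_ae (Eventually.of_forall fun x => ?_)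
  simp only [Ph, max_eq_left (le_of_lt (show (0 : ℝ) < t from ht)), map_mul, conj_ek]
  ring

lemma JJ_eq_Ug (a : ZZ m → ℂ) (ψ : Eu m → ℂ) (t : ℝ) (ξ : Eu m) :
    JJ a ψ t ξ = Ug ψ a ((0, t), 0) ξ := by
  simp only [JJ, Ug, tr, zero_add]

/-- Fubini on the half-space, with the normal variable outside. -/
lemma integral_upperH {F : Eu (m + 1) → ℂ} (hF : IntegrableOn F (upperH m)) :
    ∫ x in upperH m, F x =
      ∫ t in Set.Ioi (0 : ℝ), ∫ y : Eu m, F (Fin.snoc (α := fun _ => ℝ) y t) := by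
  have hmp := (volume_preserving_piFinSuccAbove (fun _ : Fin (m + 1) => ℝ) (Fin.last m)).symm
  have hemb := (MeasurableEquiv.piFinSuccAbove (fun _ : Fin (m + 1) => ℝ)
    (Fin.last m)).symm.measurableEmbedding
  have happ : ∀ q : ℝ × Eu m, (MeasurableEquiv.piFinSuccAbove (fun _ : Fin (m + 1) => ℝ)
      (Fin.last m)).symm q = Fin.snoc (α := fun _ => ℝ) q.2 q.1 := fun q =>
    Fin.insertNth_last' q.1 q.2
  have hpre : (MeasurableEquiv.piFinSuccAbove (fun _ : Fin (m + 1) => ℝ)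
      (Fin.last m)).symm ⁻¹' (upperH m) = Set.Ioi (0 : ℝ) ×ˢ (Set.univ : Set (Eu m)) := by
    ext q
    have : (Fin.snoc (α := fun _ => ℝ) q.2 q.1 : Eu (m + 1)) (Fin.last m) = q.1 := by simp
    simp only [Set.mem_preimage, happ, upperH, Set.mem_ofPred_eq, this, Set.mem_prod,
      Set.mem_Ioi, Set.mem_univ, and_true]
  rw [← hmp.setIntegral_preimage_emb hemb, hpre]
  have hI : IntegrableOn (fun q => F ((MeasurableEquiv.piFinSuccAbove (fun _ : Fin (m + 1) => ℝ)
      (Fin.last m)).symm q)) (Set.Ioi (0 : ℝ) ×ˢ (Set.univ : Set (Eu m)))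
      (volume.prod volume) := by
    have := (hmp.integrableOn_comp_preimage hemb (f := F) (s := upperH m)).mpr hF
    rw [hpre] at this
    exact this
  have h := setIntegral_prod _ hI
  simp only [happ, Measure.restrict_univ] at h
  simp only [happ]
  exact h

/-- The right-hand side of `key_identity`, continued to `t < 0` by its value at `t = 0`, is
continuous on the whole space. -/
lemma poisson_continuous (ha : InC μ a) (ψ : SchwartzMap (Eu m) ℂ) :
    Continuous (fun q : Eu m × ℝ =>
      ∫ ξ, ek (-q.1) ξ * JJ a (fun y => ψ y) (max q.2 0) ξ) := by
  obtain ⟨C, h0, hC⟩ := Ug_bound (wt_schwartz ψ) ha 0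
  have hUg : Continuous (fun r : (Eu m × ℝ) × Eu m =>
      Ug (fun y => ψ y) a ((0, max r.1.2 0), 0) r.2) := by
    have h0 : Continuous (fun r : ZZ m => (((0, max r.1.2 0), 0) : ZZ m)) := by fun_prop
    have h1 : Continuous (fun r : ZZ m => ((((0, max r.1.2 0), 0), r.2) : ZZ m × Eu m)) :=
      h0.prodMk continuous_snd
    have h2 : ∀ r : ZZ m, ((((0, max r.1.2 0), 0), r.2) : ZZ m × Eu m) ∈
        HS m ×ˢ (Set.univ : Set (Eu m)) := fun r =>
      ⟨show (0 : ℝ) ≤ max r.1.2 0 from le_max_right _ _, Set.mem_univ _⟩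
    have h3 := Ug_continuousOn (wt_schwartz ψ) ha
    exact ContinuousOn.comp_continuous
      (g := fun q : ZZ m × Eu m => Ug (fun y => ψ y) a q.1 q.2)
      (f := fun r : ZZ m => ((((0, max r.1.2 0), 0), r.2) : ZZ m × Eu m)) h3 h1 h2
  have hcont : Continuous (fun r : (Eu m × ℝ) × Eu m =>
      ek (-r.1.1) r.2 * JJ a (fun y => ψ y) (max r.1.2 0) r.2) := by
    simp only [JJ_eq_Ug]
    have h1 : Continuous (fun r : (Eu m × ℝ) × Eu m => ek (-r.1.1) r.2) :=
      ek_cont (X := (Eu m × ℝ) × Eu m) (f := fun r => -r.1.1) (g := fun r => r.2) (by fun_prop)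
        continuous_snd
    exact h1.mul hUg
  refine continuous_of_dominated
    (bound := fun ξ => C * jap (0 : Eu m) ^ (μ - (0 : ℕ)) * Om ξ) (fun q => ?_)
    (fun q => Eventually.of_forall fun ξ => ?_) (Om_integrable.const_mul _)
    (Eventually.of_forall fun ξ => ?_)
  · exact (hcont.comp (Continuous.prodMk_right q)).aestronglyMeasurable
  · rw [norm_mul, norm_ek, one_mul, JJ_eq_Ug]
    simpa using hC ((0, max q.2 0), 0) (show (0 : ℝ) ≤ max q.2 0 from le_max_right _ _) ξ
  · have hc : Continuous (fun q : Eu m × ℝ => (q, ξ)) := Continuous.prodMk_left ξ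
    exact Continuous.comp (f := fun q : Eu m × ℝ => (q, ξ)) (g := fun r : (Eu m × ℝ) × Eu m =>
      ek (-r.1.1) r.2 * JJ a (fun y => ψ y) (max r.1.2 0) r.2) hcont hc

end pairings

section poisson
variable {m : ℕ} {a : ZZ m → ℂ} {μ : ℝ}

lemma JJ_bound (ha : InC μ a) (ψ : SchwartzMap (Eu m) ℂ) : ∃ C : ℝ, ∀ t, 0 ≤ t → ∀ ξ,
    ‖JJ a (fun y => ψ y) t ξ‖ ≤ C * Om ξ := by
  obtain ⟨C, _, hC⟩ := Ug_bound (wt_schwartz ψ) ha 0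
  refine ⟨C * jap (0 : Eu m) ^ (μ - (0 : ℕ)), fun t ht ξ => ?_⟩
  rw [JJ_eq_Ug]
  have h := hC ((0, t), 0) ht ξ
  rwa [pow_zero, one_mul] at h

lemma JJ_integrable (ha : InC μ a) (ψ : SchwartzMap (Eu m) ℂ) {t : ℝ} (ht : 0 ≤ t) :
    Integrable (JJ a (fun y => ψ y) t) := by
  have h : JJ a (fun y => ψ y) t = Ug (fun y => ψ y) a ((0, t), 0) :=
    funext fun ξ => JJ_eq_Ug a _ t ξ
  rw [h]
  exact Ug_integrable (wt_schwartz ψ) ha ht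

lemma slice_integrable (u : SchwartzMap (Eu (m + 1)) ℂ) (t : ℝ) :
    Integrable (fun y : Eu m => u (Fin.snoc (α := fun _ => ℝ) y t)) := by
  obtain ⟨C, _, hC⟩ := slice_bound u
  have hc : Continuous (fun y : Eu m => (t, y)) := Continuous.prodMk_right t
  have h := u.continuous.comp (snoc_continuous.comp hc)
  refine (Om_integrable.const_mul (C * (1 + t ^ 2)⁻¹)).mono' h.aestronglyMeasurable
    (Eventually.of_forall fun y => ?_)
  rw [mul_assoc]
  exact hC t y

/-- Fubini on the slice at height `t`. -/
lemma poisson_slice (ha : InC μ a) (u : SchwartzMap (Eu (m + 1)) ℂ) (ψ : SchwartzMap (Eu m) ℂ)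
    {t : ℝ} (ht : 0 ≤ t) :
    ∫ y : Eu m, u (Fin.snoc (α := fun _ => ℝ) y t) *
        (starRingEnd ℂ) (∫ ξ, ek (-y) ξ * JJ a (fun y => ψ y) t ξ) =
      ∫ ξ : Eu m, (starRingEnd ℂ) (JJ a (fun y => ψ y) t ξ) * hatu (fun y => u y) ξ t := by
  have h1 : ∀ y : Eu m, u (Fin.snoc (α := fun _ => ℝ) y t) *
      (starRingEnd ℂ) (∫ ξ, ek (-y) ξ * JJ a (fun y => ψ y) t ξ) =
      ∫ ξ, ek y ξ * (u (Fin.snoc (α := fun _ => ℝ) y t) *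
        (starRingEnd ℂ) (JJ a (fun y => ψ y) t ξ)) := by
    intro y
    rw [← integral_conj, ← integral_const_mul]
    refine integral_congr_ae (Eventually.of_forall fun ξ => ?_)
    simp only [map_mul, conj_ek, neg_neg]
    ring
  simp only [h1]
  have hJ : Integrable (fun ξ => (starRingEnd ℂ) (JJ a (fun y => ψ y) t ξ)) :=
    (Complex.conjCLE.toContinuousLinearMap).integrable_comp (JJ_integrable ha ψ ht)
  have hI : Integrable (Function.uncurry fun (y ξ : Eu m) =>
      ek y ξ * (u (Fin.snoc (α := fun _ => ℝ) y t) *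
        (starRingEnd ℂ) (JJ a (fun y => ψ y) t ξ))) (volume.prod volume) := by
    have h2 := (slice_integrable u t).mul_prod hJ
    refine h2.norm.mono' (ek_continuous.aestronglyMeasurable.mul h2.aestronglyMeasurable)
      (Eventually.of_forall fun q => ?_)
    simp only [Function.uncurry]
    rw [norm_mul, norm_ek, one_mul]
  rw [integral_integral_swap hI]
  refine integral_congr_ae (Eventually.of_forall fun ξ => ?_)
  simp only
  rw [hatu_eq, ← integral_const_mul]
  refine integral_congr_ae (Eventually.of_forall fun y => ?_)
  simp only
  ring

/-- `max` does nothing on the half-space; it makes the right-hand side a restriction of the globally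
continuous function of `poisson_continuous`. -/
lemma OPK_eq (ha : InC μ a) (ψ : SchwartzMap (Eu m) ℂ) (x : Eu (m + 1))
    (hx : 0 ≤ x (Fin.last m)) :
    OPK (fun y t η => KK a ((y, t), η)) (fun y => ψ y) x = (((2 * Real.pi) ^ m : ℝ)⁻¹) •
      ∫ ξ, ek (-(Fin.init x : Eu m)) ξ *
        JJ a (fun y => ψ y) (max (x (Fin.last m)) 0) ξ := by
  rw [max_eq_left hx, ← key_identity ha (wt_schwartz ψ) (Fin.init x) hx]
  simp only [OPK, ek_neg_left]

/-- The Poisson pairing equals the same double integral as in `trace_side`. -/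
lemma poisson_side (ha : InC μ a) (u : SchwartzMap (Eu (m + 1)) ℂ) (ψ : SchwartzMap (Eu m) ℂ) :
    ∫ x in upperH m, u x *
        (starRingEnd ℂ) (OPK (fun y t η => KK a ((y, t), η)) (fun y => ψ y) x) =
      (((2 * Real.pi) ^ m : ℝ)⁻¹) • ∫ t in Set.Ioi (0 : ℝ), ∫ ξ : Eu m,
        (starRingEnd ℂ) (JJ a (fun y => ψ y) t ξ) * hatu (fun y => u y) ξ t := by
  set G : Eu m × ℝ → ℂ := fun q => ∫ ξ, ek (-q.1) ξ * JJ a (fun y => ψ y) (max q.2 0) ξ with hG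
  have hGc : Continuous G := poisson_continuous ha ψ
  obtain ⟨C, hC⟩ := JJ_bound ha ψ
  have hGb : ∀ q, ‖G q‖ ≤ ∫ ξ : Eu m, C * Om ξ := fun q =>
    norm_integral_le_of_norm_le (Om_integrable.const_mul C) (Eventually.of_forall fun ξ => by
      rw [norm_mul, norm_ek, one_mul]
      exact hC _ (le_max_right _ _) ξ)
  have hπ : Continuous (fun x : Eu (m + 1) => ((Fin.init x : Eu m), x (Fin.last m))) := by
    refine Continuous.prodMk ?_ (continuous_apply _)
    exact continuous_pi fun i => continuous_apply (Fin.castSucc i)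
  have hmeas : MeasurableSet (upperH m) :=
    (isOpen_lt continuous_const (continuous_apply (Fin.last m))).measurableSet
  have h1 : ∫ x in upperH m, u x *
        (starRingEnd ℂ) (OPK (fun y t η => KK a ((y, t), η)) (fun y => ψ y) x) =
      ∫ x in upperH m, (((2 * Real.pi) ^ m : ℝ)⁻¹) •
        (u x * (starRingEnd ℂ) (G (Fin.init x, x (Fin.last m)))) := by
    refine setIntegral_congr_fun hmeas fun x hx => ?_
    simp only [hG]
    rw [OPK_eq ha ψ x (le_of_lt (show (0 : ℝ) < x (Fin.last m) from hx)), Complex.real_smul,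
      Complex.real_smul, map_mul, Complex.conj_ofReal]
    ring
  have hF : IntegrableOn (fun x => u x * (starRingEnd ℂ) (G (Fin.init x, x (Fin.last m))))
      (upperH m) := by
    have hc : Continuous (fun x : Eu (m + 1) =>
        (starRingEnd ℂ) (G (Fin.init x, x (Fin.last m)))) :=
      Complex.continuous_conj.comp (hGc.comp hπ)
    refine ((wt_schwartz u).int1.mul_bdd (c := ∫ ξ : Eu m, C * Om ξ)
      hc.aestronglyMeasurable ?_).integrableOn
    exact Eventually.of_forall fun x => by
      rw [RCLike.norm_conj]; exact hGb _
  rw [h1, integral_smul, integral_upperH hF]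
  congr 1
  refine setIntegral_congr_fun measurableSet_Ioi fun t ht => ?_
  have ht' : (0 : ℝ) ≤ t := le_of_lt ht
  simp only [Fin.init_snoc, Fin.snoc_last, hG, max_eq_left ht']
  exact poisson_slice ha u ψ ht'

end poisson

/-- Every class-0 trace operator is `K* e⁺` for a Poisson operator `K`. -/
theorem statement_16 (m : ℕ) (hm : 1 ≤ m) (d : ℝ)
    (tk : Eu m → ℝ → Eu m → ℂ) (htk : InPK d tk) :
    ∃ k : Eu m → ℝ → Eu m → ℂ, InPK d k ∧
      ∀ (u : SchwartzMap (Eu (m + 1)) ℂ) (ψ : SchwartzMap (Eu m) ℂ),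
        (∫ x' : Eu m, OPT tk (fun y => u y) x' * (starRingEnd ℂ) (ψ x')) =
          ∫ x in upperH m, u x * (starRingEnd ℂ) (OPK k (fun y' => ψ y') x) := by
  set a : ZZ m → ℂ := fun z => (starRingEnd ℂ) (tk z.1.1 z.1.2 z.2) with ha_def
  have ha : InC (d + 1) a := (InC_of_InPK htk).conj
  refine ⟨fun y t η => KK a ((y, t), η), ?_, fun u ψ => ?_⟩
  · exact InPK_of_InC (InC.UU (wt_wgt m) (ha.PL (List.finRange m ++ List.finRange m)))
  · rw [trace_side ha (fun x t ξ => by simp [ha_def]) u ψ, poisson_side ha u ψ]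

end
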